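/- For every n=(n₁,n₂,n₃)∈ℤ³ with all nᵢ≥1 and every pair of triangles △ and △' of the three-directional grid G, the span of the restrictions to △ of the box spline translates active on △ equals (as a subspace of bivariate polynomials of total degree ≤ n₁+n₂+n₃−2) the span of the restrictions to △' of the translates active on △'; hence the polynomial space V_n = span(B_n(△̂)|_△) is independent of the choice of triangle △. -/

import Mathlib

/- ## The three-directional (type-I) grid -/

noncomputable section

open MvPolynomial Set Function

/-- Points of the plane. -/
abbrev Pt := ℝ × ℝ

/-- Bivariate real polynomials `ℝ[x,y]`. -/
abbrev BPoly := MvPolynomial (Fin 2) ℝ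

/-- Evaluation of a bivariate polynomial at a point of the plane. -/
def evalP (q : BPoly) (p : Pt) : ℝ := MvPolynomial.eval ![p.1, p.2] q

/-- Triangles of the three-directional grid `G`:  `⟨v, false⟩` is the "lower"
triangle with vertices `v, v+(1,0), v+(1,1)`, and `⟨v, true⟩` is the "upper"
triangle with vertices `v, v+(0,1), v+(1,1)`. -/
structure Tri where
  v : ℤ × ℤ
  up : Bool
deriving DecidableEq

namespace Tri

/-- The open triangle in the plane realizing a combinatorial triangle. -/
def toSet (T : Tri) : Set Pt :=
  if T.up then
    {p | (T.v.1 : ℝ) < p.1 ∧ p.1 - (T.v.1 : ℝ) < p.2 - (T.v.2 : ℝ) ∧ p.2 < (T.v.2 : ℝ) + 1}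
  else
    {p | (T.v.2 : ℝ) < p.2 ∧ p.2 - (T.v.2 : ℝ) < p.1 - (T.v.1 : ℝ) ∧ p.1 < (T.v.1 : ℝ) + 1}

/-- The closed triangle. -/
def cl (T : Tri) : Set Pt := closure T.toSet

/-- The three lattice vertices of a triangle. -/
def vertices (T : Tri) : Finset (ℤ × ℤ) :=
  if T.up then {T.v, (T.v.1, T.v.2 + 1), (T.v.1 + 1, T.v.2 + 1)}
  else {T.v, (T.v.1 + 1, T.v.2), (T.v.1 + 1, T.v.2 + 1)}

end Tri

/-- Edges of the grid: a lattice point together with a direction type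
(`0 ↦ e₁ = (1,0)`, `1 ↦ e₂ = (0,1)`, `2 ↦ e₃ = (1,1)`); the edge of type `i`
at `v` joins `v` to `v + eᵢ`. -/
abbrev Edge := (ℤ × ℤ) × Fin 3

/-- The three direction vectors `e₁, e₂, e₃`. -/
def dirZ : Fin 3 → ℤ × ℤ := ![(1, 0), (0, 1), (1, 1)]

/-- The three edges of a triangle. -/
def Tri.edges (T : Tri) : Finset Edge :=
  if T.up then {((T.v.1, T.v.2 + 1), 0), (T.v, 1), (T.v, 2)}
  else {(T.v, 0), ((T.v.1 + 1, T.v.2), 1), (T.v, 2)}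

/-- The open segment realizing an edge. -/
def Edge.seg (ε : Edge) : Set Pt :=
  {p | ∃ t : ℝ, 0 < t ∧ t < 1 ∧
    p = ((ε.1.1 : ℝ) + t * ((dirZ ε.2).1 : ℝ), (ε.1.2 : ℝ) + t * ((dirZ ε.2).2 : ℝ))}

/-- `M*`: the union of the closed triangles of a multicell domain. -/
def Mstar (M : Finset Tri) : Set Pt := ⋃ T ∈ M, T.cl

/-- `ℙ(M,V)`: continuous functions on `M*` whose restriction to each triangle
of `M` is the restriction of a polynomial in `V`. -/
def PP (M : Finset Tri) (V : Set BPoly) : Set (Pt → ℝ) :=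
  {f | ContinuousOn f (Mstar M) ∧ ∀ T ∈ M, ∃ q ∈ V, EqOn f (evalP q) T.toSet}

/-- The diamond of an edge: union of the closed triangles of `M` having `ε`
as an edge. -/
def diamond (M : Finset Tri) (ε : Edge) : Set Pt :=
  ⋃ T ∈ M.filter (fun T => ε ∈ T.edges), T.cl

/-- The spline space with edge smoothness `d` on the multicell domain `M`:
piecewise polynomials (pieces from `V`) which are `C^{dᵢ}` on the diamond of
every edge of type `i` of `M`. -/
def SplineSpace (M : Finset Tri) (V : Set BPoly) (d : Fin 3 → ℕ) : Set (Pt → ℝ) :=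
  {f | f ∈ PP M V ∧
    ∀ ε : Edge, (∃ T ∈ M, ε ∈ T.edges) → ContDiffOn ℝ (d ε.2) f (diamond M ε)}

/-- Directional derivative of a polynomial along an integer vector. -/
def dirD (e : ℤ × ℤ) (q : BPoly) : BPoly :=
  (e.1 : ℝ) • MvPolynomial.pderiv (0 : Fin 2) q + (e.2 : ℝ) • MvPolynomial.pderiv (1 : Fin 2) q

/-- The mixed directional derivative operator
`D_s = (∂_{e₁})^{s₁} (∂_{e₂})^{s₂} (∂_{e₃})^{s₃}`. -/
def Dmix (s : Fin 3 → ℕ) (q : BPoly) : BPoly :=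
  (dirD (dirZ 0))^[s 0] ((dirD (dirZ 1))^[s 1] ((dirD (dirZ 2))^[s 2] q))

/-- The index sets `Iᵢ^d`; `I₁^d = {s | s₂+s₃ ≤ d₁}` and cyclically. -/
def Iset (d : Fin 3 → ℕ) (i : Fin 3) : Set (Fin 3 → ℕ) :=
  {s | s (i + 1) + s (i + 2) ≤ d i}

/-- Two triangles of the grid are adjacent if they are distinct and share an edge. -/
def Adj (T T' : Tri) : Prop := T ≠ T' ∧ ∃ ε : Edge, ε ∈ T.edges ∧ ε ∈ T'.edges

/-- `c` is an edge-connected chain of length `m` from `T` to `T'`. -/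
def TriIsChain (T T' : Tri) (m : ℕ) (c : ℕ → Tri) : Prop :=
  c 0 = T ∧ c m = T' ∧ ∀ k < m, Adj (c k) (c (k + 1))

/-- The set of types of the edges crossed by a chain. -/
def chainTypes (m : ℕ) (c : ℕ → Tri) : Set (Fin 3) :=
  {i | ∃ k < m, ∃ ε : Edge, ε.2 = i ∧ ε ∈ (c k).edges ∧ ε ∈ (c (k + 1)).edges}

/-- Minimal length of an edge-connected chain between two triangles. -/
def minLen (T T' : Tri) : ℕ := sInf {m | ∃ c, TriIsChain T T' m c}

/-- The smoothness type `SmType(△,△')`: the types of the edges crossed by a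
shortest edge-connected chain from `△` to `△'`. -/
def SmType (T T' : Tri) : Set (Fin 3) :=
  {i | ∃ c, TriIsChain T T' (minLen T T') c ∧ i ∈ chainTypes (minLen T T') c}

/-- `q` is the polynomial piece of `f` on the triangle `T`. -/
def IsPiece (f : Pt → ℝ) (T : Tri) (q : BPoly) : Prop := EqOn f (evalP q) T.toSet

/-- The strongly regular spline space `Ŝ^d(M,V)`: piecewise polynomials such
that for any two triangles of `M` with intersecting closures, the derivatives
`D_s`, `s ∈ ⋂_{i ∈ SmType(△,△')} Iᵢ^d`, of the two polynomial pieces agree on the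
intersection of the closures (i.e. `D_s f` is continuous there). -/
def StrongSpline (M : Finset Tri) (V : Set BPoly) (d : Fin 3 → ℕ) : Set (Pt → ℝ) :=
  {f | f ∈ PP M V ∧
    ∀ T ∈ M, ∀ T' ∈ M, (T.cl ∩ T'.cl).Nonempty →
      ∀ s : Fin 3 → ℕ, (∀ i ∈ SmType T T', s ∈ Iset d i) →
        ∀ q q' : BPoly, IsPiece f T q → IsPiece f T' q' →
          ∀ x ∈ T.cl ∩ T'.cl, evalP (Dmix s q) x = evalP (Dmix s q') x}

/-- Kissing triangles: the closures intersect in exactly one point. -/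
def Kissing (T T' : Tri) : Prop := ∃ p : Pt, T.cl ∩ T'.cl = {p}

/-- An over-concave vertex of `M`: exactly one triangle of `star(ν)` is
missing from `M`. -/
def OverConcave (M : Finset Tri) (ν : ℤ × ℤ) : Prop :=
  ∃! T : Tri, ν ∈ T.vertices ∧ T ∉ M

/- ## Type-I box splines -/

/-- The Courant hat function `B_{(1,1,1)}`: the piecewise linear function on
`G` supported on `star((1,1))` with value `1` at `(1,1)` and `0` at all other
lattice points. -/
def hat (p : Pt) : ℝ :=
  max 0 (min (min (min p.1 p.2) (min (2 - p.1) (2 - p.2)))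
             (min (1 - (p.1 - p.2)) (1 + (p.1 - p.2))))

/-- The type-I box spline `B_{(n₁,n₂,n₃)}`, defined by repeated directional
convolution starting from the Courant hat function (the result is independent
of the order of the convolutions); junk value `0` if some `nᵢ = 0`. -/
noncomputable def boxN : ℕ → ℕ → ℕ → Pt → ℝ
  | 0, _, _, _ => 0
  | _ + 1, 0, _, _ => 0
  | _ + 1, _ + 1, 0, _ => 0
  | 1, 1, 1, p => hat p
  | a + 2, b + 1, c + 1, p =>
      ∫ t in (0:ℝ)..1, boxN (a + 1) (b + 1) (c + 1) (p.1 - t, p.2)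
  | 1, b + 2, c + 1, p =>
      ∫ t in (0:ℝ)..1, boxN 1 (b + 1) (c + 1) (p.1, p.2 - t)
  | 1, 1, c + 2, p =>
      ∫ t in (0:ℝ)..1, boxN 1 1 (c + 1) (p.1 - t, p.2 - t)
  termination_by a b c _ => a + b + c
  decreasing_by all_goals omega

/-- The translate `B_n(· - w)` of the box spline. -/
def trBox (n₁ n₂ n₃ : ℕ) (w : ℤ × ℤ) (p : Pt) : ℝ :=
  boxN n₁ n₂ n₃ (p.1 - (w.1 : ℝ), p.2 - (w.2 : ℝ))

/-- `Supp_n(△̂)`: lattice translates of `B_n` that do not vanish identically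
on the triangle `T`. -/
def activeSet (n₁ n₂ n₃ : ℕ) (T : Tri) : Set (ℤ × ℤ) :=
  {w | ¬ ∀ p ∈ T.toSet, trBox n₁ n₂ n₃ w p = 0}

/-- `c` is the coefficient vector of the polynomial `q` with respect to the
active box-spline translates on `T`:  `q|_T = Σ_β λ_T^β(q)·β|_T`. -/
def Represents (n₁ n₂ n₃ : ℕ) (T : Tri) (q : BPoly) (c : (ℤ × ℤ) →₀ ℝ) : Prop :=
  ↑c.support ⊆ activeSet n₁ n₂ n₃ T ∧
    ∀ p ∈ T.toSet, evalP q p = c.sum fun w a => a * trBox n₁ n₂ n₃ w p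

/-- `V_n` (relative to the triangle `T`): polynomials whose restriction to `T`
is a linear combination of the active box-spline translates on `T`. -/
def VSpace (n₁ n₂ n₃ : ℕ) (T : Tri) : Set BPoly :=
  {q | ∃ c, Represents n₁ n₂ n₃ T q c}

/-!
On every triangle the polynomial pieces of the series `∑_w c_w B_n(· - w)` form the same space,
namely the Dahmen–Micchelli space of all `q` with `D_i^{n_i} D_j^{n_j} q = 0` for `i ≠ j`, whose
description mentions no triangle.

*Pieces lie in the space.* Differentiating a series along `e_i` replaces the convolution with the
`i`-th segment by a backward difference of the coefficients. Applying `D_i^{n_i-1} D_j^{n_j-1}`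
thus leaves a series of hat functions averaged along the third direction `e_l` only. On a strip
between consecutive grid lines of type `l` a hat function is the sum of a function constant along
`e_i` and one constant along `e_j`; its mixed differences in these directions vanish there, and
averaging along `e_l` preserves this.

*The space consists of pieces.* By induction on `n`, `D_l q` is the piece of a series; summing its
coefficients along `e_l` gives a series of the next order whose piece has the same `D_l`-derivative
as `q`. The remaining error is a polynomial constant along `e_l`, and such polynomials are
reproduced on the whole plane by coefficients depending on a single lattice coordinate.
-/

open MeasureTheory Topology

theorem exists_eq_add_single {ι : Type*} [DecidableEq ι] {m : ι → ℕ} {i : ι} (hi : m i ≠ 0) :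
    ∃ m' : ι → ℕ, m = m' + Pi.single i 1 := by
  refine ⟨Function.update m i (m i - 1), funext fun j => ?_⟩
  rcases eq_or_ne j i with rfl | hj
  · simp only [Pi.add_apply, update_self, Pi.single_eq_same]
    omega
  · simp [hj]

@[elab_as_elim]
theorem pi_nat_induction {ι : Type*} [Finite ι] [DecidableEq ι] {P : (ι → ℕ) → Prop}
    (zero : P 0) (add_single : ∀ m i, P m → P (m + Pi.single i 1)) (m : ι → ℕ) : P m := by
  have := Fintype.ofFinite ι
  induction hk : ∑ i, m i generalizing m with
  | zero =>
    have hm : m = 0 := funext fun i => by simpa using Finset.sum_eq_zero_iff.1 hk i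
    exact hm ▸ zero
  | succ k ih =>
    obtain ⟨i, hi⟩ : ∃ i, m i ≠ 0 := by
      by_contra! h
      simp [h] at hk
    obtain ⟨m', rfl⟩ := exists_eq_add_single hi
    refine add_single m' i (ih m' ?_)
    simpa [Finset.sum_add_distrib] using hk

/-! ### Lattice directions and symmetric coordinates -/

/-- The inclusion of the lattice `ℤ²` into the plane. -/
def toPt : ℤ × ℤ →+ Pt := (Int.castAddHom ℝ).prodMap (Int.castAddHom ℝ)

/-- The direction `eᵢ` of the grid as a vector of the plane. -/
def dirVec (i : Fin 3) : Pt := toPt (dirZ i)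

/-- The coordinates `(y, -x, x - y)` of `(x, y)`, summing to zero: the edges of type `i` lie on the
lines where the `i`-th coordinate is an integer. They put the three directions on an equal footing,
and work for lattice points as well as for points of the plane. -/
def coord (R : Type*) [CommRing R] : R × R →ₗ[R] Fin 3 → R where
  toFun p := ![p.2, -p.1, p.1 - p.2]
  map_add' p q := by
    ext i
    fin_cases i <;> simp <;> ring
  map_smul' a p := by
    ext i
    fin_cases i <;> simp [mul_sub]

section coord

variable {R : Type*} [CommRing R]

theorem sum_coord (p : R × R) : ∑ i, coord R p i = 0 := by
  simp only [coord, LinearMap.coe_mk, AddHom.coe_mk, Fin.sum_univ_three, Matrix.cons_val]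
  ring

theorem coord_injective : Injective (coord R) := fun p q h => by
  have h₀ : p.2 = q.2 := congrFun h 0
  have h₁ : -p.1 = -q.1 := congrFun h 1
  exact Prod.ext (neg_injective h₁) h₀

theorem coord_mk_of_sum_eq_zero {k : Fin 3 → R} (hk : ∑ i, k i = 0) :
    coord R (-k 1, k 0) = k := by
  rw [Fin.sum_univ_three] at hk
  ext i
  fin_cases i
  · simp [coord]
  · simp [coord]
  · simp only [coord, LinearMap.coe_mk, AddHom.coe_mk]
    exact (by linear_combination -hk : -k 1 - k 0 = k 2)

theorem coord_toPt (w : ℤ × ℤ) (i : Fin 3) : coord ℝ (toPt w) i = coord ℤ w i := by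
  fin_cases i <;> simp [coord, toPt]

theorem coord_dirZ_self (i : Fin 3) : coord ℤ (dirZ i) i = 0 := by
  fin_cases i <;> rfl

theorem coord_dirZ_mul_self {i j : Fin 3} (hij : i ≠ j) :
    coord ℤ (dirZ i) j * coord ℤ (dirZ i) j = 1 := by
  revert i j
  decide

theorem coord_dirVec_self (i : Fin 3) : coord ℝ (dirVec i) i = 0 := by
  rw [dirVec, coord_toPt, coord_dirZ_self, Int.cast_zero]

theorem coord_add_smul_dirVec_self (p : Pt) (t : ℝ) (i : Fin 3) :
    coord ℝ (p + t • dirVec i) i = coord ℝ p i := by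
  simp [coord_dirVec_self]

theorem exists_coord_dirVec_eq_single_sub_single (i : Fin 3) :
    ∃ j k, j ≠ k ∧ coord ℝ (dirVec i) = Pi.single j 1 - Pi.single k 1 := by
  refine ⟨![2, 0, 0] i, ![1, 2, 1] i, by fin_cases i <;> decide, funext fun l => ?_⟩
  fin_cases i <;> fin_cases l <;> simp [coord, dirVec, toPt, dirZ]

theorem norm_dirVec_le (i : Fin 3) : ‖dirVec i‖ ≤ 1 := by
  fin_cases i <;> simp [dirVec, toPt, dirZ, Prod.norm_def]

end coord

/-! ### Averaging along the grid directions -/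

/-- Translation `f ↦ f(· - v)` of continuous functions. -/
def shift (v : Pt) : Module.End ℝ C(Pt, ℝ) where
  toFun f := f.comp (ContinuousMap.id Pt - ContinuousMap.const Pt v)
  map_add' _ _ := rfl
  map_smul' _ _ := rfl

theorem shift_apply (v : Pt) (f : C(Pt, ℝ)) (p : Pt) : shift v f p = f (p - v) := rfl

/-- The directional convolution `f ↦ ∫₀¹ f(· - t v) dt` by which box splines are built. -/
def avg (v : Pt) : Module.End ℝ C(Pt, ℝ) where
  toFun f :=
    ⟨fun p => ∫ t in (0 : ℝ)..1, f (p - t • v),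
      intervalIntegral.continuous_parametric_intervalIntegral_of_continuous' (by fun_prop) 0 1⟩
  map_add' f g := by
    ext p
    exact intervalIntegral.integral_add (Continuous.intervalIntegrable (by fun_prop) 0 1)
      (Continuous.intervalIntegrable (by fun_prop) 0 1)
  map_smul' a f := by
    ext p
    simp

theorem avg_apply (v : Pt) (f : C(Pt, ℝ)) (p : Pt) :
    avg v f p = ∫ t in (0 : ℝ)..1, f (p - t • v) := rfl

theorem commute_avg (u v : Pt) : Commute (avg u) (avg v) := by
  ext f p
  have hf : Continuous (uncurry fun s t : ℝ => f (p - s • u - t • v)) := by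
    unfold uncurry
    fun_prop
  simp only [Module.End.mul_apply, avg_apply, intervalIntegral.integral_of_le zero_le_one]
  rw [integral_integral_swap]
  · simp only [sub_right_comm]
  · rw [Measure.prod_restrict]
    exact (hf.continuousOn.integrableOn_compact (isCompact_Icc.prod isCompact_Icc)).mono_set
      (prod_mono Ioc_subset_Icc_self Ioc_subset_Icc_self)

theorem commute_avg_shift (u v : Pt) : Commute (avg u) (shift v) := by
  ext f p
  simp only [Module.End.mul_apply, avg_apply, shift_apply, sub_right_comm]

theorem avg_congr_of_norm_le {v : Pt} (hv : ‖v‖ ≤ 1) {f g : C(Pt, ℝ)} {R : ℝ}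
    (h : ∀ p, ‖p‖ ≤ R + 1 → f p = g p) {p : Pt} (hp : ‖p‖ ≤ R) : avg v f p = avg v g p := by
  refine intervalIntegral.integral_congr fun t ht => h _ ?_
  rw [uIcc_of_le zero_le_one] at ht
  calc ‖p - t • v‖ ≤ ‖p‖ + ‖t • v‖ := norm_sub_le _ _
    _ = ‖p‖ + t * ‖v‖ := by rw [norm_smul, Real.norm_eq_abs, abs_of_nonneg ht.1]
    _ ≤ R + 1 := add_le_add hp (mul_le_one₀ ht.2 (norm_nonneg v) hv)

theorem avg_eq_of_forall_sub_smul {v p : Pt} {f : C(Pt, ℝ)} (h : ∀ t : ℝ, f (p - t • v) = f p) :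
    avg v f p = f p := by
  simp [avg_apply, h]

theorem avg_add_smul_eq_integral (v : Pt) (f : C(Pt, ℝ)) (p : Pt) (t : ℝ) :
    avg v f (p + t • v) =
      (∫ s in (0 : ℝ)..t, f (p + s • v)) - ∫ s in (0 : ℝ)..(t - 1), f (p + s • v) := by
  have hint (a b : ℝ) : IntervalIntegrable (fun s : ℝ => f (p + s • v)) volume a b :=
    Continuous.intervalIntegrable (by fun_prop) a b
  rw [intervalIntegral.integral_interval_sub_left (hint _ _) (hint _ _), avg_apply]
  simpa only [sub_smul, add_sub_assoc, sub_zero] using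
    intervalIntegral.integral_comp_sub_left (a := 0) (b := 1) (fun s => f (p + s • v)) t

theorem hasDerivAt_avg (v : Pt) (f : C(Pt, ℝ)) (p : Pt) (t : ℝ) :
    HasDerivAt (fun t : ℝ => avg v f (p + t • v))
      (f (p + t • v) - f (p + t • v - v)) t := by
  have hf : Continuous fun s : ℝ => f (p + s • v) := by fun_prop
  have h₁ := (hf.integral_hasStrictDerivAt 0 t).hasDerivAt
  have h₂ := (hf.integral_hasStrictDerivAt 0 (t - 1)).hasDerivAt.comp_sub_const t 1
  simp only [avg_add_smul_eq_integral]
  simpa only [sub_smul, one_smul, ← add_sub_assoc] using h₁.fun_sub h₂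

/-- Convolution with `mᵢ` unit segments in each grid direction `eᵢ`; it turns the hat
function into the box spline `B_{m+(1,1,1)}`. -/
def iterAvg (m : Fin 3 → ℕ) : Module.End ℝ C(Pt, ℝ) :=
  avg (dirVec 0) ^ m 0 * avg (dirVec 1) ^ m 1 * avg (dirVec 2) ^ m 2

theorem iterAvg_zero : iterAvg 0 = 1 := by
  simp [iterAvg]

theorem iterAvg_add_single (m : Fin 3 → ℕ) (i : Fin 3) :
    iterAvg (m + Pi.single i 1) = avg (dirVec i) * iterAvg m := by
  have h₀ (v : Pt) : Commute (avg v) (avg (dirVec 0) ^ m 0) := (commute_avg v _).pow_right _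
  have h₁ (v : Pt) : Commute (avg v) (avg (dirVec 1) ^ m 1) := (commute_avg v _).pow_right _
  fin_cases i
  · simp [iterAvg, pow_succ', mul_assoc]
  · simp [iterAvg, pow_succ', ← mul_assoc, (h₀ _).eq]
  · simp [iterAvg, pow_succ', ← mul_assoc, ((h₀ _).mul_right (h₁ _)).eq]

theorem iterAvg_add_single_apply (m : Fin 3 → ℕ) (i : Fin 3) (f : C(Pt, ℝ)) :
    iterAvg (m + Pi.single i 1) f = avg (dirVec i) (iterAvg m f) := by
  rw [iterAvg_add_single, Module.End.mul_apply]

theorem commute_iterAvg_shift (m : Fin 3 → ℕ) (v : Pt) :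
    Commute (iterAvg m) (shift v) := by
  induction m using pi_nat_induction with
  | zero => simpa only [iterAvg_zero] using Commute.one_left _
  | add_single m i ih =>
    simpa only [iterAvg_add_single] using (commute_avg_shift _ v).mul_left ih

theorem iterAvg_congr_of_norm_le (m : Fin 3 → ℕ) {f g : C(Pt, ℝ)} {R : ℝ}
    (h : ∀ p, ‖p‖ ≤ R + ∑ i, (m i : ℝ) → f p = g p) {p : Pt} (hp : ‖p‖ ≤ R) :
    iterAvg m f p = iterAvg m g p := by
  induction m using pi_nat_induction generalizing R p with
  | zero => simpa [iterAvg_zero] using h p (by simpa using hp)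
  | add_single m i ih =>
    simp only [iterAvg_add_single_apply]
    refine avg_congr_of_norm_le (norm_dirVec_le i) (fun x hx => ih (fun y hy => h y ?_) hx) hp
    rw [add_right_comm] at hy
    simpa [Finset.sum_add_distrib, Pi.single_apply, add_assoc] using hy

/-! ### Cells of the grid in barycentric coordinates -/

/-- A triangle of the grid, encoded through the symmetric coordinates: the points `p` at which all
`sgn * (coord p i - base i)` are nonnegative. These three numbers sum to `1` and are the
barycentric coordinates of `p`. The sign is `1` for the lower and `-1` for the upper triangles. -/
structure GridCell where
  sgn : ℤˣ
  base : Fin 3 → ℤ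
  sum_base : ∑ i, base i = -(sgn : ℤ)

namespace GridCell

/-- Barycentric coordinates with respect to a cell. -/
def bary (K : GridCell) (p : Pt) (i : Fin 3) : ℝ := (K.sgn : ℤ) * (coord ℝ p i - K.base i)

/-- The closed triangle of the plane realizing a cell. -/
def toSet (K : GridCell) : Set Pt := {p | K.bary p ∈ stdSimplex ℝ (Fin 3)}

/-- The vertex of a cell at which the `i`-th barycentric coordinate is `1`. -/
def vertex (K : GridCell) (i : Fin 3) : ℤ × ℤ :=
  let k := K.base + Pi.single i (K.sgn : ℤ)
  (-k 1, k 0)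

theorem coord_vertex (K : GridCell) (i : Fin 3) :
    coord ℤ (K.vertex i) = K.base + Pi.single i (K.sgn : ℤ) :=
  coord_mk_of_sum_eq_zero (by simp [Finset.sum_add_distrib, K.sum_base])

theorem sgn_mul_self (K : GridCell) : ((K.sgn : ℤ) : ℝ) * (K.sgn : ℤ) = 1 := by
  exact_mod_cast Int.units_coe_mul_self K.sgn

theorem sum_bary (K : GridCell) (p : Pt) : ∑ i, K.bary p i = 1 := by
  have hbase : ∑ i, (K.base i : ℝ) = -(K.sgn : ℤ) := by exact_mod_cast K.sum_base
  simp only [bary, ← Finset.mul_sum, Finset.sum_sub_distrib, sum_coord, hbase]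
  linear_combination K.sgn_mul_self

theorem mem_toSet_iff {K : GridCell} {p : Pt} : p ∈ K.toSet ↔ ∀ i, 0 ≤ K.bary p i :=
  and_iff_left (K.sum_bary p)

theorem coord_eq_base_add (K : GridCell) (p : Pt) (i : Fin 3) :
    coord ℝ p i = K.base i + (K.sgn : ℤ) * K.bary p i := by
  rw [bary]
  linear_combination (K.base i - coord ℝ p i) * K.sgn_mul_self

theorem sum_floor_coord (p : Pt) :
    ∑ i, ⌊coord ℝ p i⌋ = 0 ∨ ∑ i, ⌊coord ℝ p i⌋ = -1 ∨ ∑ i, ⌊coord ℝ p i⌋ = -2 := by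
  have hsum : ((∑ i, ⌊coord ℝ p i⌋ : ℤ) : ℝ) + ∑ i, Int.fract (coord ℝ p i) = 0 := by
    rw [Int.cast_sum, ← Finset.sum_add_distrib]
    simp only [Int.floor_add_fract, sum_coord]
  have hnonneg : 0 ≤ ∑ i, Int.fract (coord ℝ p i) :=
    Finset.sum_nonneg fun i _ => Int.fract_nonneg _
  have hlt : ∑ i, Int.fract (coord ℝ p i) < 3 := by
    have h (i : Fin 3) : Int.fract (coord ℝ p i) < 1 := Int.fract_lt_one _
    rw [Fin.sum_univ_three]
    linarith [h 0, h 1, h 2]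
  have h₁ : ∑ i, ⌊coord ℝ p i⌋ < 1 := by
    rify
    push_cast at hsum
    linarith
  have h₂ : -3 < ∑ i, ⌊coord ℝ p i⌋ := by
    rify
    push_cast at hsum
    linarith
  omega

theorem exists_mem_toSet (p : Pt) : ∃ K : GridCell, p ∈ K.toSet := by
  rcases sum_floor_coord p with h | h | h
  · refine ⟨⟨1, fun i => ⌊coord ℝ p i⌋ - if i = 0 then 1 else 0, by simp [h]⟩,
      mem_toSet_iff.2 fun i => ?_⟩
    have := Int.floor_le (coord ℝ p i)
    simp only [bary, Units.val_one, Int.cast_one, one_mul]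
    split_ifs <;> push_cast <;> linarith
  · exact ⟨⟨1, fun i => ⌊coord ℝ p i⌋, h⟩,
      mem_toSet_iff.2 fun i => by simp [bary]⟩
  · exact ⟨⟨-1, fun i => ⌊coord ℝ p i⌋ + 1, by simp [Finset.sum_add_distrib, h]⟩,
      mem_toSet_iff.2 fun i => by simpa [bary] using (Int.lt_floor_add_one (coord ℝ p i)).le⟩

theorem bary_sub_smul (K : GridCell) (p v : Pt) (t : ℝ) (i : Fin 3) :
    K.bary (p - t • v) i = K.bary p i - t * ((K.sgn : ℤ) * coord ℝ v i) := by
  simp only [bary, map_sub, map_smul, Pi.sub_apply, Pi.smul_apply, smul_eq_mul]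
  ring

theorem exists_bary_sub_smul_dirVec (K : GridCell) (i : Fin 3) :
    ∃ j k, j ≠ k ∧ ∀ (p : Pt) (t : ℝ),
      K.bary (p - t • dirVec i) = K.bary p + t • (Pi.single j 1 - Pi.single k 1) := by
  obtain ⟨j, k, hjk, hcoord⟩ := exists_coord_dirVec_eq_single_sub_single i
  rcases Int.units_eq_one_or K.sgn with hK | hK
  · refine ⟨k, j, hjk.symm, fun p t => funext fun l => ?_⟩
    simp only [bary_sub_smul, hcoord, hK, Units.val_one, Int.cast_one, one_mul, Pi.add_apply,
      Pi.smul_apply, Pi.sub_apply, smul_eq_mul]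
    ring
  · refine ⟨j, k, hjk, fun p t => funext fun l => ?_⟩
    simp only [bary_sub_smul, hcoord, hK, Units.val_neg, Units.val_one, Int.cast_neg, Int.cast_one,
      Pi.add_apply, Pi.smul_apply, Pi.sub_apply, smul_eq_mul]
    ring

/-- The neighbour of a cell across the edge on which the `k`-th barycentric coordinate vanishes. -/
def neighbour (K : GridCell) (k : Fin 3) : GridCell where
  sgn := -K.sgn
  base i := K.base i + if i = k then 0 else (K.sgn : ℤ)
  sum_base := by
    have h : ∑ i, (if i = k then 0 else (K.sgn : ℤ)) = 2 * K.sgn := by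
      fin_cases k <;> simp [Fin.sum_univ_three] <;> ring
    rw [Finset.sum_add_distrib, K.sum_base, h, Units.val_neg]
    ring

theorem bary_neighbour_self (K : GridCell) (k : Fin 3) (p : Pt) :
    (K.neighbour k).bary p k = -K.bary p k := by
  simp [bary, neighbour]

theorem bary_neighbour_of_ne (K : GridCell) {i k : Fin 3} (hik : i ≠ k) (p : Pt) :
    (K.neighbour k).bary p i = 1 - K.bary p i := by
  simp only [bary, neighbour, if_neg hik, Units.val_neg, Int.cast_neg, Int.cast_add]
  linear_combination K.sgn_mul_self

end GridCell

/-! ### Linear interpolation by hat functions -/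

/-- The Courant hat function as a continuous map. -/
def hatMap : C(Pt, ℝ) := ⟨hat, by unfold hat; fun_prop⟩

theorem forall_norm_coord_le_iff {p : Pt} {r : ℝ} :
    (∀ i, ‖coord ℝ p i‖ ≤ r) ↔ |p.2| ≤ r ∧ |p.1| ≤ r ∧ |p.1 - p.2| ≤ r := by
  simp [Fin.forall_fin_succ, coord]

theorem hatMap_apply_eq_max_norm_coord (p : Pt) :
    hatMap p = max 0 (1 - ‖coord ℝ (p - 1)‖) := by
  change max 0 _ = _
  refine congrArg (max 0) (eq_of_forall_le_iff fun z => ?_)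
  rw [le_sub_comm, pi_norm_le_iff_of_nonempty]
  rw [forall_norm_coord_le_iff]
  simp only [le_min_iff, Prod.fst_sub, Prod.snd_sub, Prod.fst_one, Prod.snd_one,
    abs_le]
  grind

theorem eq_single_of_sum_eq_one {ι : Type*} [Fintype ι] [DecidableEq ι] {k : ι → ℤ}
    (hsum : ∑ i, k i = 1) (h : ∀ i, 0 ≤ k i ∧ k i ≤ 1) : ∃ i, k = Pi.single i 1 := by
  obtain ⟨i, hi⟩ : ∃ i, k i ≠ 0 := by
    by_contra! h₀
    simp [h₀] at hsum
  have hki : k i = 1 := by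
    have := h i
    omega
  have hrest : ∑ j ∈ Finset.univ.erase i, k j = 0 := by
    rw [← Finset.add_sum_erase _ _ (Finset.mem_univ i), hki] at hsum
    simpa using hsum
  refine ⟨i, funext fun j => ?_⟩
  rcases eq_or_ne j i with rfl | hj
  · simpa using hki
  · simpa [hj] using (Finset.sum_eq_zero_iff_of_nonneg fun l _ => (h l).1).1 hrest j (by simp [hj])

theorem norm_sub_single_of_mem_stdSimplex {ι : Type*} [Fintype ι] [DecidableEq ι] {b : ι → ℝ}
    (hb : b ∈ stdSimplex ℝ ι) (i : ι) : ‖b - Pi.single i 1‖ = 1 - b i := by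
  have hle (j : ι) : b j ≤ 1 := (mem_Icc_of_mem_stdSimplex hb j).2
  refine le_antisymm ((pi_norm_le_iff_of_nonneg (by linarith [hle i])).2 fun j => ?_) ?_
  · rcases eq_or_ne j i with rfl | hj
    · simp [abs_of_nonpos, hle]
    · have : b i + b j ≤ 1 := by
        rw [← hb.2, ← Finset.sum_pair hj.symm]
        exact Finset.sum_le_sum_of_subset_of_nonneg (Finset.subset_univ _) fun l _ _ => hb.1 l
      simpa [hj, abs_of_nonneg (hb.1 j)] using (by linarith : b j ≤ 1 - b i)
  · calc 1 - b i = ‖(b - Pi.single i 1 : ι → ℝ) i‖ := by simp [abs_of_nonpos, hle]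
      _ ≤ ‖b - Pi.single i 1‖ := norm_le_pi_norm _ i

theorem one_le_norm_sub_of_forall_ne_single {ι : Type*} [Fintype ι] [DecidableEq ι] {b : ι → ℝ}
    (hb : b ∈ stdSimplex ℝ ι) {k : ι → ℤ} (hsum : ∑ i, k i = 1) (hk : ∀ i, k ≠ Pi.single i 1) :
    1 ≤ ‖b - fun i => (k i : ℝ)‖ := by
  obtain ⟨i, hi⟩ : ∃ i, ¬(0 ≤ k i ∧ k i ≤ 1) := by
    by_contra! h
    obtain ⟨i, hi⟩ := eq_single_of_sum_eq_one hsum h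
    exact hk i hi
  obtain ⟨h₀, h₁⟩ := mem_Icc_of_mem_stdSimplex hb i
  refine le_trans ?_ (norm_le_pi_norm (b - fun i => (k i : ℝ)) i)
  rw [Pi.sub_apply, Real.norm_eq_abs, le_abs]
  rcases (by omega : k i ≤ -1 ∨ 2 ≤ k i) with h | h <;> rify at h
  · exact Or.inl (by linarith)
  · exact Or.inr (by linarith)

theorem max_zero_one_sub_norm_sub {ι : Type*} [Fintype ι] [DecidableEq ι] {b : ι → ℝ}
    (hb : b ∈ stdSimplex ℝ ι) {k : ι → ℤ} (hsum : ∑ i, k i = 1) :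
    max 0 (1 - ‖b - fun i => (k i : ℝ)‖) = ∑ i, if k = Pi.single i 1 then b i else 0 := by
  by_cases h : ∃ i, k = Pi.single i 1
  · obtain ⟨i, rfl⟩ := h
    have hcast : (fun j => ((Pi.single i 1 : ι → ℤ) j : ℝ)) = Pi.single i 1 := by
      ext j
      simp [Pi.single_apply]
    have hinj (j : ι) : (Pi.single i 1 : ι → ℤ) = Pi.single j 1 ↔ i = j :=
      ⟨fun h => by_contra fun hij => by simpa [hij] using congrFun h i, fun h => h ▸ rfl⟩
    simp [hcast, hinj, norm_sub_single_of_mem_stdSimplex hb, hb.1 i]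
  · push Not at h
    rw [max_eq_left (by linarith [one_le_norm_sub_of_forall_ne_single hb hsum h])]
    simp [h]

theorem shift_hatMap_eq_max_norm_coord (w : ℤ × ℤ) (p : Pt) :
    shift (toPt w) hatMap p = max 0 (1 - ‖coord ℝ p - fun i => (coord ℤ (w + 1) i : ℝ)‖) := by
  have h : coord ℝ (p - toPt w - 1) = coord ℝ p - fun i => (coord ℤ (w + 1) i : ℝ) := by
    have h₁ : toPt 1 = 1 := by simp [toPt, Prod.ext_iff]
    ext i
    rw [Pi.sub_apply, ← coord_toPt, map_add, h₁, sub_sub, map_sub, Pi.sub_apply]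
  rw [shift_apply, hatMap_apply_eq_max_norm_coord, h]

namespace GridCell

theorem shift_hatMap_eq_sum {K : GridCell} {p : Pt} (hp : p ∈ K.toSet) (w : ℤ × ℤ) :
    shift (toPt w) hatMap p = ∑ i, if w = K.vertex i - 1 then K.bary p i else 0 := by
  set k : Fin 3 → ℤ := fun i => K.sgn * (coord ℤ (w + 1) i - K.base i) with hk
  have hsgn := Int.units_coe_mul_self K.sgn
  have hsum : ∑ i, k i = 1 := by
    rw [hk, ← Finset.mul_sum, Finset.sum_sub_distrib, sum_coord, K.sum_base]
    linear_combination hsgn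
  have hvertex (i : Fin 3) : k = Pi.single i 1 ↔ w = K.vertex i - 1 := by
    rw [eq_sub_iff_add_eq, ← coord_injective.eq_iff, K.coord_vertex]
    constructor <;> refine fun h => funext fun j => ?_
    · have hj : k j = Pi.single (M := fun _ => ℤ) i 1 j := congrFun h j
      simp only [Pi.add_apply, Pi.single_apply, hk] at hj ⊢
      split_ifs at hj ⊢ <;> grind
    · have hj := congrFun h j
      simp only [Pi.add_apply, Pi.single_apply, hk] at hj ⊢
      split_ifs at hj ⊢ <;> grind
  have hbary : (K.bary p - fun i => (k i : ℝ)) =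
      ((K.sgn : ℤ) : ℝ) • (coord ℝ p - fun i => (coord ℤ (w + 1) i : ℝ)) := by
    ext i
    simp only [bary, hk, Pi.sub_apply, Pi.smul_apply, smul_eq_mul, Int.cast_mul, Int.cast_sub]
    ring
  have hnorm : ‖K.bary p - fun i => (k i : ℝ)‖ =
      ‖coord ℝ p - fun i => (coord ℤ (w + 1) i : ℝ)‖ := by
    rcases Int.units_eq_one_or K.sgn with h | h <;> simp [hbary, h, norm_sub_rev]
  rw [shift_hatMap_eq_max_norm_coord, ← hnorm, max_zero_one_sub_norm_sub hp hsum]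
  simp only [hvertex]

end GridCell

theorem norm_le_of_shift_hatMap_ne_zero {w : ℤ × ℤ} {p : Pt} (h : shift (toPt w) hatMap p ≠ 0) :
    ‖w‖ ≤ ‖p‖ + 2 := by
  have hlt : ‖coord ℝ p - fun i => (coord ℤ (w + 1) i : ℝ)‖ < 1 := by
    by_contra! hge
    exact h (by rw [shift_hatMap_eq_max_norm_coord, max_eq_left (by linarith)])
  rw [pi_norm_lt_iff one_pos] at hlt
  have h₁ := hlt 1
  have h₀ := hlt 0
  simp only [coord, Pi.sub_apply, LinearMap.coe_mk, AddHom.coe_mk, Matrix.cons_val,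
    Real.norm_eq_abs, abs_lt] at h₀ h₁
  obtain ⟨hp₁, hp₂⟩ := max_le_iff.1 (Prod.norm_def p).ge
  rw [Real.norm_eq_abs, abs_le] at hp₁ hp₂
  rw [Prod.norm_def, max_le_iff, Int.norm_eq_abs, Int.norm_eq_abs, abs_le, abs_le]
  push_cast [Prod.fst_add, Prod.snd_add, Prod.fst_one, Prod.snd_one] at h₀ h₁
  constructor <;> constructor <;> linarith

theorem finite_setOf_norm_le (R : ℝ) : {w : ℤ × ℤ | ‖w‖ ≤ R}.Finite := by
  simpa [Metric.closedBall] using (isCompact_closedBall (0 : ℤ × ℤ) R).finite_of_discrete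

theorem finite_support_mul_shift_hatMap (c : ℤ × ℤ → ℝ) (p : Pt) :
    (support fun w => c w * shift (toPt w) hatMap p).Finite :=
  (finite_setOf_norm_le (‖p‖ + 2)).subset fun _ hw =>
    norm_le_of_shift_hatMap_ne_zero (right_ne_zero_of_mul hw)

theorem locallyFinite_support_mul_shift_hatMap (c : ℤ × ℤ → ℝ) :
    LocallyFinite fun w => support fun p => c w * shift (toPt w) hatMap p := fun p => by
  refine ⟨Metric.ball p 1, Metric.ball_mem_nhds p one_pos,
    (finite_setOf_norm_le (‖p‖ + 1 + 2)).subset ?_⟩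
  rintro w ⟨x, hx, hxp⟩
  have hnorm : ‖x‖ ≤ ‖p‖ + 1 := by
    linarith [norm_sub_norm_le x p, mem_ball_iff_norm.1 hxp]
  exact (norm_le_of_shift_hatMap_ne_zero (right_ne_zero_of_mul hx)).trans (by gcongr)

/-- The piecewise linear function `∑_w c_w B_{(1,1,1)}(· - w)`, whose value at the lattice point `w`
is `c (w - 1)`, since the hat function `B_{(1,1,1)}` peaks at `(1, 1)`. -/
def hatSpline : (ℤ × ℤ → ℝ) →ₗ[ℝ] C(Pt, ℝ) where
  toFun c :=
    ⟨fun p => ∑ᶠ w, c w * shift (toPt w) hatMap p,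
      continuous_finsum (fun _ => by fun_prop) (locallyFinite_support_mul_shift_hatMap c)⟩
  map_add' c d := by
    ext p
    simp only [ContinuousMap.add_apply, ContinuousMap.coe_mk, Pi.add_apply, add_mul]
    exact finsum_add_distrib (finite_support_mul_shift_hatMap c p)
      (finite_support_mul_shift_hatMap d p)
  map_smul' a c := by
    ext p
    simp only [ContinuousMap.smul_apply, ContinuousMap.coe_mk, Pi.smul_apply, smul_eq_mul,
      mul_assoc, RingHom.id_apply]
    exact (mul_finsum _ a).symm

theorem hatSpline_apply_eq_sum (c : ℤ × ℤ → ℝ) {p : Pt} {s : Finset (ℤ × ℤ)}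
    (hs : ∀ w, shift (toPt w) hatMap p ≠ 0 → w ∈ s) :
    hatSpline c p = ∑ w ∈ s, c w * shift (toPt w) hatMap p :=
  finsum_eq_sum_of_support_subset _ fun w hw => hs w (right_ne_zero_of_mul hw)

theorem hatSpline_comp_sub (c : ℤ × ℤ → ℝ) (v : ℤ × ℤ) :
    hatSpline (fun w => c (w - v)) = shift (toPt v) (hatSpline c) := by
  ext p
  change ∑ᶠ w, c (w - v) * hatMap (p - toPt w) = ∑ᶠ w, c w * hatMap (p - toPt v - toPt w)
  rw [← finsum_comp_equiv (Equiv.addRight v)]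
  simp [sub_sub, add_comm]

theorem GridCell.hatSpline_apply {K : GridCell} {p : Pt} (hp : p ∈ K.toSet) (c : ℤ × ℤ → ℝ) :
    hatSpline c p = ∑ i, K.bary p i * c (K.vertex i - 1) := by
  have hs (w : ℤ × ℤ) (hw : shift (toPt w) hatMap p ≠ 0) :
      w ∈ Finset.univ.image fun i => K.vertex i - 1 := by
    rw [GridCell.shift_hatMap_eq_sum hp] at hw
    obtain ⟨i, -, hi⟩ := Finset.exists_ne_zero_of_sum_ne_zero hw
    simp only [ne_eq, ite_eq_right_iff, not_forall] at hi
    exact Finset.mem_image.2 ⟨i, Finset.mem_univ i, hi.1.symm⟩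
  simp only [hatSpline_apply_eq_sum c hs, GridCell.shift_hatMap_eq_sum hp, Finset.mul_sum]
  rw [Finset.sum_comm]
  refine Finset.sum_congr rfl fun i _ => ?_
  simp [mul_comm]

/-- The piecewise linear interpolation of a function on `ℤ`. -/
def linInterp (d : ℤ → ℝ) (x : ℝ) : ℝ := (1 - Int.fract x) * d ⌊x⌋ + Int.fract x * d (⌊x⌋ + 1)

theorem linInterp_intCast_add (d : ℤ → ℝ) (n : ℤ) {b : ℝ} (hb : b ∈ Icc (0 : ℝ) 1) :
    linInterp d (n + b) = (1 - b) * d n + b * d (n + 1) := by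
  rcases hb.2.eq_or_lt with rfl | hlt
  · rw [← Int.cast_one, ← Int.cast_add, linInterp, Int.fract_intCast, Int.floor_intCast]
    simp
  · have hfloor : ⌊b⌋ = 0 := Int.floor_eq_zero_iff.2 ⟨hb.1, hlt⟩
    have hfract : Int.fract b = b := Int.fract_eq_self.2 ⟨hb.1, hlt⟩
    simp [linInterp, hfloor, hfract]

theorem linInterp_add_mul (α β x : ℝ) : linInterp (fun n => α + β * n) x = α + β * x := by
  rw [linInterp]
  push_cast
  linear_combination β * Int.floor_add_fract x

theorem GridCell.hatSpline_comp_coord_apply {K : GridCell} {p : Pt} (hp : p ∈ K.toSet)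
    (d : ℤ → ℝ) (i : Fin 3) :
    hatSpline (fun w => d (coord ℤ (w + 1) i)) p =
      (1 - K.bary p i) * d (K.base i) + K.bary p i * d (K.base i + K.sgn) := by
  have hrest : ∑ j ∈ Finset.univ.erase i, K.bary p j = 1 - K.bary p i := by
    rw [← K.sum_bary p, Finset.sum_erase_eq_sub (Finset.mem_univ i)]
  rw [GridCell.hatSpline_apply hp, ← Finset.sum_erase_add _ _ (Finset.mem_univ i), ← hrest,
    Finset.sum_mul]
  congr 1
  · refine Finset.sum_congr rfl fun j hj => ?_
    simp [K.coord_vertex, (Finset.ne_of_mem_erase hj).symm]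
  · simp [K.coord_vertex]

theorem hatSpline_comp_coord (d : ℤ → ℝ) (i : Fin 3) (p : Pt) :
    hatSpline (fun w => d (coord ℤ (w + 1) i)) p = linInterp d (coord ℝ p i) := by
  obtain ⟨K, hp⟩ := GridCell.exists_mem_toSet p
  have hb : K.bary p i ∈ Icc (0 : ℝ) 1 := mem_Icc_of_mem_stdSimplex hp i
  rw [GridCell.hatSpline_comp_coord_apply hp, K.coord_eq_base_add p i]
  rcases Int.units_eq_one_or K.sgn with hsgn | hsgn
  · simp [hsgn, linInterp_intCast_add d _ hb]
  · have h := linInterp_intCast_add d (K.base i - 1) (b := 1 - K.bary p i)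
      ⟨sub_nonneg.2 hb.2, by linarith [hb.1]⟩
    have hpoint : ((K.base i - 1 : ℤ) : ℝ) + (1 - K.bary p i) = K.base i - K.bary p i := by
      push_cast
      ring
    rw [hpoint, sub_add_cancel, sub_sub_cancel] at h
    simp [hsgn, h, ← sub_eq_add_neg, add_comm (K.bary p i * _)]

/-! ### Box spline series -/

/-- The box spline series `∑_w c_w B_{m+(1,1,1)}(· - w)`. -/
def spline (m : Fin 3 → ℕ) : (ℤ × ℤ → ℝ) →ₗ[ℝ] C(Pt, ℝ) := iterAvg m ∘ₗ hatSpline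

theorem spline_apply (m : Fin 3 → ℕ) (c : ℤ × ℤ → ℝ) : spline m c = iterAvg m (hatSpline c) := rfl

theorem spline_zero : spline 0 = hatSpline := by
  simp [spline, iterAvg_zero, Module.End.one_eq_id]

theorem spline_add_single_apply (m : Fin 3 → ℕ) (i : Fin 3) (c : ℤ × ℤ → ℝ) :
    spline (m + Pi.single i 1) c = avg (dirVec i) (spline m c) :=
  iterAvg_add_single_apply m i _

theorem spline_comp_sub (m : Fin 3 → ℕ) (c : ℤ × ℤ → ℝ) (v : ℤ × ℤ) :
    spline m (fun w => c (w - v)) = shift (toPt v) (spline m c) := by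
  rw [spline_apply, hatSpline_comp_sub]
  exact LinearMap.congr_fun (commute_iterAvg_shift m (toPt v)).eq _

theorem spline_apply_eq_sum (m : Fin 3 → ℕ) (c : ℤ × ℤ → ℝ) {p : Pt} {R : ℝ} (hp : ‖p‖ ≤ R)
    {s : Finset (ℤ × ℤ)} (hs : ∀ w : ℤ × ℤ, ‖w‖ ≤ R + ∑ i, (m i : ℝ) + 2 → w ∈ s) :
    spline m c p = ∑ w ∈ s, c w * iterAvg m hatMap (p - toPt w) := by
  have hhat (x : Pt) (hx : ‖x‖ ≤ R + ∑ i, (m i : ℝ)) :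
      hatSpline c x = (∑ w ∈ s, c w • shift (toPt w) hatMap) x := by
    rw [hatSpline_apply_eq_sum c fun w hw =>
      hs w ((norm_le_of_shift_hatMap_ne_zero hw).trans (by gcongr))]
    simp
  have hshift (w : ℤ × ℤ) :
      iterAvg m (shift (toPt w) hatMap) = shift (toPt w) (iterAvg m hatMap) :=
    LinearMap.congr_fun (commute_iterAvg_shift m (toPt w)).eq _
  rw [spline_apply, iterAvg_congr_of_norm_le m hhat hp]
  simp [hshift, shift_apply]

/-- The backward difference of a lattice function in the grid direction `eᵢ`. -/
def backwardDiff (i : Fin 3) (c : ℤ × ℤ → ℝ) : ℤ × ℤ → ℝ := fun w => c w - c (w - dirZ i)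

theorem spline_backwardDiff_apply (m : Fin 3 → ℕ) (i : Fin 3) (c : ℤ × ℤ → ℝ) (p : Pt) :
    spline m (backwardDiff i c) p = spline m c p - spline m c (p - dirVec i) := by
  have h : backwardDiff i c = c - fun w => c (w - dirZ i) := rfl
  rw [h, map_sub, spline_comp_sub]
  rfl

theorem hasDerivAt_spline (m : Fin 3 → ℕ) (i : Fin 3) (c : ℤ × ℤ → ℝ) (p : Pt) (t : ℝ) :
    HasDerivAt (fun t : ℝ => spline (m + Pi.single i 1) c (p + t • dirVec i))
      (spline m (backwardDiff i c) (p + t • dirVec i)) t := by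
  rw [spline_add_single_apply, spline_backwardDiff_apply]
  exact hasDerivAt_avg _ _ p t

theorem spline_comp_coord_add_smul (m : Fin 3 → ℕ) (d : ℤ → ℝ) (i : Fin 3) (p : Pt) (t : ℝ) :
    spline m (fun w => d (coord ℤ (w + 1) i)) (p + t • dirVec i) =
      spline m (fun w => d (coord ℤ (w + 1) i)) p := by
  set c : ℤ × ℤ → ℝ := fun w => d (coord ℤ (w + 1) i)
  have hhat : shift (-(t • dirVec i)) (hatSpline c) = hatSpline c := by
    ext x
    rw [shift_apply, sub_neg_eq_add, hatSpline_comp_coord, hatSpline_comp_coord,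
      coord_add_smul_dirVec_self]
  have hshift : shift (-(t • dirVec i)) (spline m c) = spline m c := by
    rw [spline_apply]
    nth_rw 2 [← hhat]
    exact (LinearMap.congr_fun (commute_iterAvg_shift m _).eq _).symm
  simpa [shift_apply] using DFunLike.congr_fun hshift p

theorem spline_const (m : Fin 3 → ℕ) (a : ℝ) (p : Pt) : spline m (fun _ => a) p = a := by
  induction m using pi_nat_induction generalizing p with
  | zero =>
    rw [spline_zero]
    simpa [linInterp, ← add_mul] using hatSpline_comp_coord (fun _ => a) 0 p
  | add_single m i ih =>
    rw [spline_add_single_apply, avg_eq_of_forall_sub_smul fun t => by rw [ih, ih], ih]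

theorem exists_int_antidifference {A : Type*} [AddCommGroup A] (d : ℤ → A) :
    ∃ c : ℤ → A, ∀ n, c n - c (n - 1) = d n := by
  refine ⟨fun n => ∑ k ∈ Finset.Ioc 0 n, d k - ∑ k ∈ Finset.Ioc n 0, d k, fun n => ?_⟩
  rcases lt_or_ge 0 n with hn | hn
  · have h : Finset.Ioc 0 n = insert n (Finset.Ioc 0 (n - 1)) := by
      ext k
      simp only [Finset.mem_Ioc, Finset.mem_insert]
      omega
    simp [h, Finset.Ioc_eq_empty_of_le hn.le, Finset.Ioc_eq_empty_of_le (Int.le_sub_one_of_lt hn)]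
  · have h : Finset.Ioc (n - 1) 0 = insert n (Finset.Ioc n 0) := by
      ext k
      simp only [Finset.mem_Ioc, Finset.mem_insert]
      omega
    simp [h, Finset.Ioc_eq_empty_of_le hn, Finset.Ioc_eq_empty_of_le ((sub_one_lt n).le.trans hn)]

theorem exists_antidifference {G A : Type*} [AddCommGroup G] [AddCommGroup A] (μ : G →+ ℤ) {v : G}
    (hv : μ v = 1) (d : G → A) : ∃ c : G → A, ∀ w, c w - c (w - v) = d w := by
  choose γ hγ using fun b : G => exists_int_antidifference fun n => d (b + n • v)
  refine ⟨fun w => γ (w - μ w • v) (μ w), fun w => ?_⟩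
  have hbase : w - v - (μ w - 1) • v = w - μ w • v := by
    rw [sub_smul, one_smul]
    abel
  have hμ : μ (w - v) = μ w - 1 := by rw [map_sub, hv]
  simpa only [hbase, hμ, sub_add_cancel] using hγ (w - μ w • v) (μ w)

theorem exists_backwardDiff_eq (i : Fin 3) (d : ℤ × ℤ → ℝ) : ∃ c, backwardDiff i c = d := by
  obtain ⟨μ, hμ⟩ : ∃ μ : ℤ × ℤ →+ ℤ, μ (dirZ i) = 1 := by
    fin_cases i
    exacts [⟨AddMonoidHom.fst ℤ ℤ, rfl⟩, ⟨AddMonoidHom.snd ℤ ℤ, rfl⟩, ⟨AddMonoidHom.fst ℤ ℤ, rfl⟩]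
  obtain ⟨c, hc⟩ := exists_antidifference μ hμ d
  exact ⟨c, funext hc⟩

theorem exists_backwardDiff_comp_coord_eq {i j : Fin 3} (hij : i ≠ j) (d : ℤ → ℝ) :
    ∃ e : ℤ → ℝ, backwardDiff i (fun w => e (coord ℤ (w + 1) j)) =
      fun w => d (coord ℤ (w + 1) j) := by
  obtain ⟨e, he⟩ := exists_antidifference (AddMonoidHom.mulLeft (coord ℤ (dirZ i) j))
    (coord_dirZ_mul_self hij) d
  refine ⟨e, funext fun w => ?_⟩
  have hcoord : coord ℤ (w - dirZ i + 1) j = coord ℤ (w + 1) j - coord ℤ (dirZ i) j := by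
    rw [sub_add_eq_add_sub, map_sub, Pi.sub_apply]
  rw [backwardDiff, hcoord]
  exact he _

/-! ### Bivariate polynomials as functions -/

theorem continuous_evalP (q : BPoly) : Continuous (evalP q) :=
  (MvPolynomial.continuous_eval q).comp (by fun_prop)

theorem eq_of_eqOn_evalP {U : Set Pt} (hU : IsOpen U) (hne : U.Nonempty) {q r : BPoly}
    (h : EqOn (evalP q) (evalP r) U) : q = r := by
  obtain ⟨p, hp⟩ := hne
  obtain ⟨ε, hε, hball⟩ := Metric.isOpen_iff.mp hU p hp
  refine MvPolynomial.funext_set (fun k : Fin 2 => Metric.ball (![p.1, p.2] k) ε) (fun k => ?_)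
    fun x hx => ?_
  · rw [Real.ball_eq_Ioo]
    exact Ioo_infinite (by linarith)
  · have hxU : (x 0, x 1) ∈ U := by
      refine hball ?_
      rw [← ball_prod_same]
      exact ⟨hx 0 (mem_univ _), hx 1 (mem_univ _)⟩
    have hx' : ![x 0, x 1] = x := funext fun k => by fin_cases k <;> rfl
    simpa only [evalP, hx'] using h hxU

theorem commute_pderiv {σ R : Type*} [CommRing R] (i j : σ) :
    Commute (pderiv (R := R) i).toLinearMap (pderiv (R := R) j).toLinearMap := by
  classical
  have h : ⁅pderiv (R := R) i, pderiv (R := R) j⁆ = 0 := by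
    refine derivation_ext fun k => ?_
    simp [Derivation.commutator_apply, pderiv_X, Pi.single_apply, apply_ite]
  refine LinearMap.ext fun q => sub_eq_zero.mp ?_
  simpa [Derivation.commutator_apply] using DFunLike.congr_fun h q

/-- The directional derivative of bivariate polynomials, as a linear endomorphism so that powers and
commutation are available. -/
def dirDeriv (v : Pt) : Module.End ℝ BPoly :=
  v.1 • (pderiv 0).toLinearMap + v.2 • (pderiv 1).toLinearMap

theorem dirDeriv_apply (v : Pt) (q : BPoly) :
    dirDeriv v q = v.1 • pderiv 0 q + v.2 • pderiv 1 q := rfl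

theorem commute_dirDeriv (u v : Pt) : Commute (dirDeriv u) (dirDeriv v) := by
  have h (i j : Fin 2) (a b : ℝ) :=
    ((commute_pderiv (R := ℝ) i j).smul_left a).smul_right b
  exact ((h _ _ _ _).add_right (h _ _ _ _)).add_left ((h _ _ _ _).add_right (h _ _ _ _))

theorem dirDeriv_comm (u v : Pt) (q : BPoly) :
    dirDeriv u (dirDeriv v q) = dirDeriv v (dirDeriv u q) :=
  LinearMap.congr_fun (commute_dirDeriv u v).eq q

theorem hasDerivAt_evalP (q : BPoly) (p v : Pt) (t : ℝ) :
    HasDerivAt (fun t : ℝ => evalP q (p + t • v)) (evalP (dirDeriv v q) (p + t • v)) t := by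
  induction q using MvPolynomial.induction_on with
  | C a => simpa [evalP, dirDeriv_apply] using hasDerivAt_const t a
  | add q r hq hr => simpa only [evalP, map_add] using hq.fun_add hr
  | mul_X q k hq =>
    have hX : HasDerivAt (fun t : ℝ => evalP (X k) (p + t • v))
        (evalP (dirDeriv v (X k)) (p + t • v)) t := by
      fin_cases k
      · simpa [evalP, dirDeriv_apply, pderiv_X] using
          ((hasDerivAt_id t).mul_const v.1).const_add p.1
      · simpa [evalP, dirDeriv_apply, pderiv_X] using
          ((hasDerivAt_id t).mul_const v.2).const_add p.2
    have hleibniz : dirDeriv v (q * X k) = dirDeriv v q * X k + q * dirDeriv v (X k) := by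
      simp only [dirDeriv_apply, Derivation.leibniz, smul_eq_C_mul, smul_eq_mul]
      ring
    simpa only [hleibniz, evalP, map_add, map_mul] using hq.fun_mul hX

theorem evalP_add_smul_of_dirDeriv_eq_C {q : BPoly} {v : Pt} {b : ℝ} (h : dirDeriv v q = C b)
    (p : Pt) (t : ℝ) : evalP q (p + t • v) = evalP q p + t * b := by
  have hderiv (s : ℝ) : HasDerivAt (fun t : ℝ => evalP q (p + t • v) - t * b) 0 s := by
    simpa [h, evalP] using (hasDerivAt_evalP q p v s).fun_sub ((hasDerivAt_id s).mul_const b)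
  have := is_const_of_deriv_eq_zero (fun s => (hderiv s).differentiableAt)
    (fun s => (hderiv s).deriv) t 0
  simp only [zero_smul, add_zero, zero_mul, sub_zero] at this
  linarith

theorem evalP_add_smul_of_dirDeriv_eq_zero {q : BPoly} {v : Pt} (h : dirDeriv v q = 0) (p : Pt)
    (t : ℝ) : evalP q (p + t • v) = evalP q p := by
  simpa using evalP_add_smul_of_dirDeriv_eq_C (h.trans C_0.symm) p t

theorem integral_pow_mul_evalP_mul_X (q : BPoly) (k : Fin 2) (p v : Pt) (a b : ℝ) (j : ℕ) :
    ∫ t in a..b, t ^ j * evalP (q * X k) (p - t • v) =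
      ![p.1, p.2] k * (∫ t in a..b, t ^ j * evalP q (p - t • v)) -
        ![v.1, v.2] k * ∫ t in a..b, t ^ (j + 1) * evalP q (p - t • v) := by
  have hint (i : ℕ) : IntervalIntegrable (fun t : ℝ => t ^ i * evalP q (p - t • v)) volume a b :=
    ((continuous_pow i).mul ((continuous_evalP q).comp (by fun_prop))).intervalIntegrable _ _
  have hmul (t : ℝ) : t ^ j * evalP (q * X k) (p - t • v) =
      ![p.1, p.2] k * (t ^ j * evalP q (p - t • v)) -
        ![v.1, v.2] k * (t ^ (j + 1) * evalP q (p - t • v)) := by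
    fin_cases k <;> simp [evalP] <;> ring
  simp only [hmul]
  rw [intervalIntegral.integral_sub ((hint j).const_mul _) ((hint (j + 1)).const_mul _),
    intervalIntegral.integral_const_mul, intervalIntegral.integral_const_mul]

theorem exists_evalP_eq_integral_pow_mul_monomial {α β : BPoly} (hα : α.totalDegree ≤ 1)
    (hβ : β.totalDegree ≤ 1) (v : Pt) (s : Fin 2 →₀ ℕ) (a : ℝ) (j : ℕ) :
    ∃ Q : BPoly, Q.totalDegree ≤ (monomial s a).totalDegree + j + 1 ∧
      ∀ p, evalP Q p = ∫ t in evalP α p..evalP β p, t ^ j * evalP (monomial s a) (p - t • v) := by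
  revert j
  refine induction_on_monomial (motive := fun q => ∀ j : ℕ, ∃ Q : BPoly,
    Q.totalDegree ≤ q.totalDegree + j + 1 ∧
      ∀ p, evalP Q p = ∫ t in evalP α p..evalP β p, t ^ j * evalP q (p - t • v))
    (fun a j => ?_) (fun q k ih j => ?_) s a
  · have hpow {γ : BPoly} (hγ : γ.totalDegree ≤ 1) : (γ ^ (j + 1)).totalDegree ≤ j + 1 :=
      (totalDegree_pow γ (j + 1)).trans (by simpa using Nat.mul_le_mul_left (j + 1) hγ)
    refine ⟨(a / (j + 1)) • (β ^ (j + 1) - α ^ (j + 1)), ?_, fun p => ?_⟩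
    · simpa using (totalDegree_smul_le _ _).trans
        ((totalDegree_sub _ _).trans (max_le (hpow hβ) (hpow hα)))
    · simp only [evalP, smul_eval, map_sub, map_pow, eval_C, intervalIntegral.integral_mul_const,
        integral_pow]
      ring
  · rcases eq_or_ne q 0 with rfl | hq
    · exact ⟨0, by simp, fun p => by simp [evalP]⟩
    obtain ⟨A, hAdeg, hA⟩ := ih j
    obtain ⟨B, hBdeg, hB⟩ := ih (j + 1)
    refine ⟨A * X k - ![v.1, v.2] k • B, ?_, fun p => ?_⟩
    · rw [totalDegree_mul_of_isDomain hq (X_ne_zero k), totalDegree_X]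
      refine (totalDegree_sub _ _).trans (max_le ?_ ?_)
      · have := totalDegree_mul A (X k)
        rw [totalDegree_X] at this
        omega
      · have := totalDegree_smul_le (![v.1, v.2] k) B
        omega
    · rw [integral_pow_mul_evalP_mul_X, ← hA, ← hB]
      simp [evalP, mul_comm]

theorem exists_evalP_eq_integral {α β : BPoly} (hα : α.totalDegree ≤ 1) (hβ : β.totalDegree ≤ 1)
    (v : Pt) (q : BPoly) :
    ∃ Q : BPoly, Q.totalDegree ≤ q.totalDegree + 1 ∧
      ∀ p, evalP Q p = ∫ t in evalP α p..evalP β p, evalP q (p - t • v) := by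
  choose Q hdeg hQ using fun s =>
    exists_evalP_eq_integral_pow_mul_monomial hα hβ v s (coeff s q) 0
  refine ⟨∑ s ∈ q.support, Q s, totalDegree_finsetSum_le fun s hs => (hdeg s).trans ?_, fun p => ?_⟩
  · rw [totalDegree_monomial _ (mem_support_iff.1 hs)]
    exact Nat.succ_le_succ (le_totalDegree hs)
  · have hint (s) : IntervalIntegrable (fun t : ℝ => evalP (monomial s (coeff s q)) (p - t • v))
        volume (evalP α p) (evalP β p) :=
      ((continuous_evalP _).comp (by fun_prop)).intervalIntegrable _ _
    have hsum (x : Pt) : evalP q x = ∑ s ∈ q.support, evalP (monomial s (coeff s q)) x := by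
      simp only [evalP, ← map_sum, ← as_sum]
    simp only [hsum, intervalIntegral.integral_finsetSum fun s _ => hint s]
    simpa [evalP] using Finset.sum_congr rfl fun s _ => hQ s p

/-! ### Piecewise polynomial functions -/

/-- The functions agreeing with a polynomial of degree at most `d` on each closed cell of the
grid. -/
def IsPiecewisePoly (d : ℕ) (f : Pt → ℝ) : Prop :=
  ∀ K : GridCell, ∃ q : BPoly, q.totalDegree ≤ d ∧ EqOn f (evalP q) K.toSet

theorem exists_evalP_eq_coord (i : Fin 3) :
    ∃ q : BPoly, q.totalDegree ≤ 1 ∧ ∀ p, evalP q p = coord ℝ p i := by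
  refine ⟨![X 1, -X 0, X 0 - X 1] i, ?_, fun p => ?_⟩
  · fin_cases i
    · simp
    · simp
    · simpa using totalDegree_sub (X 0 : BPoly) (X 1)
  · fin_cases i <;> simp [evalP, coord]

namespace GridCell

theorem exists_evalP_eq_bary (K : GridCell) (i : Fin 3) :
    ∃ q : BPoly, q.totalDegree ≤ 1 ∧ ∀ p, evalP q p = K.bary p i := by
  obtain ⟨q, hdeg, hq⟩ := exists_evalP_eq_coord i
  refine ⟨((K.sgn : ℤ) : ℝ) • (q - C (K.base i : ℝ)), ?_, fun p => ?_⟩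
  · exact (totalDegree_smul_le _ _).trans ((totalDegree_sub_C_le _ _).trans hdeg)
  · simp [bary, ← hq, evalP]

theorem exists_sub_smul_dirVec_mem_toSet (K : GridCell) (i : Fin 3) :
    ∃ j k, ∀ p ∈ K.toSet, 0 ≤ K.bary p k ∧ K.bary p k ≤ 1 - K.bary p j ∧ 1 - K.bary p j ≤ 1 ∧
      (∀ t ∈ Icc 0 (K.bary p k), p - t • dirVec i ∈ K.toSet) ∧
      (∀ t ∈ Icc (K.bary p k) (1 - K.bary p j), p - t • dirVec i ∈ (K.neighbour k).toSet) ∧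
      ∀ t ∈ Icc (1 - K.bary p j) 1, p - t • dirVec i ∈ ((K.neighbour k).neighbour j).toSet := by
  obtain ⟨j, k, hjk, hbary⟩ := K.exists_bary_sub_smul_dirVec i
  refine ⟨j, k, fun p hp => ?_⟩
  rw [mem_toSet_iff] at hp
  have hsum : K.bary p j + K.bary p k ≤ 1 := by
    rw [← K.sum_bary p, ← Finset.sum_pair hjk]
    exact Finset.sum_le_univ_sum_of_nonneg hp
  have hle (l : Fin 3) : K.bary p l ≤ 1 := by
    rw [← K.sum_bary p]
    exact Finset.single_le_sum (fun i _ => hp i) (Finset.mem_univ l)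
  have hj (t : ℝ) : K.bary (p - t • dirVec i) j = K.bary p j + t := by simp [hbary, hjk]
  have hk (t : ℝ) : K.bary (p - t • dirVec i) k = K.bary p k - t := by
    simp [hbary, hjk.symm, ← sub_eq_add_neg]
  have hl (t : ℝ) {l : Fin 3} (hlj : l ≠ j) (hlk : l ≠ k) :
      K.bary (p - t • dirVec i) l = K.bary p l := by simp [hbary, hlj, hlk]
  have hcases (l : Fin 3) : l = j ∨ l = k ∨ l ≠ j ∧ l ≠ k := by tauto
  refine ⟨hp k, by linarith, by linarith [hp j], ?_, ?_, ?_⟩ <;>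
    refine fun t ⟨ht₀, ht₁⟩ => mem_toSet_iff.2 fun l => ?_ <;>
    rcases hcases l with rfl | rfl | ⟨hlj, hlk⟩
  · linarith [hj t, hp l]
  · linarith [hk t]
  · linarith [hl t hlj hlk, hp l]
  · linarith [hj t, K.bary_neighbour_of_ne hjk (p - t • dirVec i)]
  · linarith [hk t, K.bary_neighbour_self l (p - t • dirVec i)]
  · linarith [hl t hlj hlk, K.bary_neighbour_of_ne hlk (p - t • dirVec i), hle l]
  · rw [bary_neighbour_self, bary_neighbour_of_ne _ hjk, hj]
    linarith
  · rw [bary_neighbour_of_ne _ hjk.symm, bary_neighbour_self, hk]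
    linarith [hp l]
  · rw [bary_neighbour_of_ne _ hlj, bary_neighbour_of_ne _ hlk, hl t hlj hlk]
    linarith [hp l]

end GridCell

theorem IsPiecewisePoly.exists_evalP_eq_integral {d : ℕ} {f : Pt → ℝ} (hf : IsPiecewisePoly d f)
    (K : GridCell) {α β : BPoly} (hα : α.totalDegree ≤ 1) (hβ : β.totalDegree ≤ 1) (v : Pt) :
    ∃ Q : BPoly, Q.totalDegree ≤ d + 1 ∧ ∀ p, evalP α p ≤ evalP β p →
      (∀ t ∈ Icc (evalP α p) (evalP β p), p - t • v ∈ K.toSet) →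
      ∫ t in evalP α p..evalP β p, f (p - t • v) = evalP Q p := by
  obtain ⟨q, hdeg, hq⟩ := hf K
  obtain ⟨Q, hQdeg, hQ⟩ := _root_.exists_evalP_eq_integral hα hβ v q
  refine ⟨Q, hQdeg.trans (by gcongr), fun p hle hmem => ?_⟩
  rw [hQ]
  refine intervalIntegral.integral_congr fun t ht => hq (hmem t ?_)
  rwa [uIcc_of_le hle] at ht

theorem isPiecewisePoly_avg {d : ℕ} {f : C(Pt, ℝ)} (hf : IsPiecewisePoly d f) (i : Fin 3) :
    IsPiecewisePoly (d + 1) (avg (dirVec i) f) := fun K => by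
  obtain ⟨j, k, hmem⟩ := K.exists_sub_smul_dirVec_mem_toSet i
  obtain ⟨βj, hβj, hj⟩ := K.exists_evalP_eq_bary j
  obtain ⟨βk, hβk, hk⟩ := K.exists_evalP_eq_bary k
  have hβj' : (1 - βj).totalDegree ≤ 1 := (totalDegree_sub _ _).trans (by simpa using hβj)
  obtain ⟨Q₀, hQ₀, h₀⟩ := hf.exists_evalP_eq_integral K (α := 0) (by simp) hβk (dirVec i)
  obtain ⟨Q₁, hQ₁, h₁⟩ := hf.exists_evalP_eq_integral (K.neighbour k) hβk hβj' (dirVec i)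
  obtain ⟨Q₂, hQ₂, h₂⟩ := hf.exists_evalP_eq_integral ((K.neighbour k).neighbour j) (β := 1) hβj'
    (by simp) (dirVec i)
  refine ⟨Q₀ + Q₁ + Q₂, ?_, fun p hp => ?_⟩
  · exact (totalDegree_add _ _).trans (max_le ((totalDegree_add _ _).trans (max_le hQ₀ hQ₁)) hQ₂)
  have hint (a b : ℝ) : IntervalIntegrable (fun t : ℝ => f (p - t • dirVec i)) volume a b :=
    Continuous.intervalIntegrable (by fun_prop) a b
  have hzero : evalP 0 p = 0 := by simp [evalP]
  have hone : evalP 1 p = 1 := by simp [evalP]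
  have hsub : evalP (1 - βj) p = 1 - K.bary p j := by simp [evalP, ← hj]
  have hadd : evalP (Q₀ + Q₁ + Q₂) p = evalP Q₀ p + evalP Q₁ p + evalP Q₂ p := by simp [evalP]
  obtain ⟨hk₀, hkj, hj₁, hK₀, hK₁, hK₂⟩ := hmem p hp
  specialize h₀ p
  specialize h₁ p
  specialize h₂ p
  rw [hzero, hk] at h₀
  rw [hk, hsub] at h₁
  rw [hsub, hone] at h₂
  rw [hadd, ← h₀ hk₀ hK₀, ← h₁ hkj hK₁, ← h₂ hj₁ hK₂, avg_apply,
    intervalIntegral.integral_add_adjacent_intervals (hint _ _) (hint _ _),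
    intervalIntegral.integral_add_adjacent_intervals (hint _ _) (hint _ _)]

theorem isPiecewisePoly_hatSpline (c : ℤ × ℤ → ℝ) : IsPiecewisePoly 1 (hatSpline c) := fun K => by
  choose β hdeg hβ using K.exists_evalP_eq_bary
  refine ⟨∑ i, β i * C (c (K.vertex i - 1)), totalDegree_finsetSum_le fun i _ => ?_, fun p hp => ?_⟩
  · simpa using (totalDegree_mul (β i) (C (c (K.vertex i - 1)))).trans (by simpa using hdeg i)
  · simp [K.hatSpline_apply hp, ← hβ, evalP]

theorem isPiecewisePoly_spline (m : Fin 3 → ℕ) (c : ℤ × ℤ → ℝ) :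
    IsPiecewisePoly (∑ i, m i + 1) (spline m c) := by
  induction m using pi_nat_induction with
  | zero => simpa [spline_zero] using isPiecewisePoly_hatSpline c
  | add_single m i ih =>
    rw [spline_add_single_apply]
    simpa [Finset.sum_add_distrib, add_right_comm] using isPiecewisePoly_avg ih i

/-! ### Mixed differences on strips -/

theorem univ_fin_three_eq {i j l : Fin 3} (hij : i ≠ j) (hil : i ≠ l) (hjl : j ≠ l) :
    Finset.univ = {i, j, l} := by
  revert i j l
  decide

theorem norm_eq_max_of_ne (x : Fin 3 → ℝ) {i j l : Fin 3} (hij : i ≠ j) (hil : i ≠ l)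
    (hjl : j ≠ l) : ‖x‖ = max |x i| (max |x j| |x l|) := by
  refine eq_of_forall_ge_iff fun r => ?_
  have hforall : (∀ k, |x k| ≤ r) ↔ ∀ k ∈ ({i, j, l} : Finset (Fin 3)), |x k| ≤ r := by
    simp [← univ_fin_three_eq hij hil hjl]
  simp only [pi_norm_le_iff_of_nonempty, Real.norm_eq_abs, hforall, max_le_iff]
  simp

theorem max_zero_one_sub_norm_eq_sub {x : Fin 3 → ℝ} (hx : ∑ i, x i = 0) {i j l : Fin 3}
    (hij : i ≠ j) (hil : i ≠ l) (hjl : j ≠ l) (hl : x l ∈ Icc (0 : ℝ) 1) :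
    max 0 (1 - ‖x‖) = max 0 (min (1 + x i) 1) - max 0 (min (-x j) 1) := by
  have hsum : x i + x j + x l = 0 := by
    simpa [univ_fin_three_eq hij hil hjl, hij, hil, hjl, add_assoc] using hx
  obtain ⟨hl₀, hl₁⟩ := hl
  rw [norm_eq_max_of_ne x hij hil hjl, abs_of_nonneg hl₀]
  rcases le_total 0 (x j) with hj | hj
  · have hi : x i ≤ 0 := by linarith
    rw [abs_of_nonneg hj, abs_of_nonpos hi, max_eq_left (max_le (by linarith) (by linarith)),
      min_eq_left (a := 1 + x i) (by linarith), max_eq_left (b := min _ _) (by simp [hj])]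
    ring_nf
  rcases le_total 0 (x i) with hi | hi
  · rw [abs_of_nonpos hj, abs_of_nonneg hi, max_eq_left (a := -x j) (by linarith),
      max_eq_right (a := x i) (by linarith), min_eq_right (a := 1 + x i) (by linarith)]
    rcases le_total (-x j) 1 with h | h
    · rw [max_eq_right (by linarith), min_eq_left h, max_eq_right (a := 0) (by linarith),
        max_eq_right (by linarith)]
    · rw [max_eq_left (by linarith), min_eq_right h]
      simp
  · rw [abs_of_nonpos hj, abs_of_nonpos hi, max_eq_right (a := -x j) (by linarith),
      max_eq_right (a := -x i) (by linarith), max_eq_right (by linarith),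
      min_eq_left (by linarith), min_eq_left (by linarith), max_eq_right (by linarith),
      max_eq_right (by linarith)]
    linarith

theorem max_zero_one_sub_norm_eq_zero {ι : Type*} [Fintype ι] {x : ι → ℝ} {l : ι}
    (hl : 1 ≤ |x l|) : max 0 (1 - ‖x‖) = 0 :=
  max_eq_left (by linarith [norm_le_pi_norm x l, Real.norm_eq_abs (x l)])

theorem exists_max_zero_one_sub_norm_eq_add {i j l : Fin 3} (hij : i ≠ j) (hil : i ≠ l)
    (hjl : j ≠ l) (n : ℤ) :
    ∃ G H : ℝ → ℝ, ∀ x : Fin 3 → ℝ, ∑ i, x i = 0 → x l ∈ Icc (n : ℝ) (n + 1) →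
      max 0 (1 - ‖x‖) = G (x i) + H (x j) := by
  obtain hn | rfl | rfl | hn : n < -1 ∨ n = -1 ∨ n = 0 ∨ 0 < n := by omega
  · have hn' : (n : ℝ) + 1 ≤ -1 := by exact_mod_cast (by omega : n + 1 ≤ -1)
    refine ⟨0, 0, fun x _ hl => ?_⟩
    simpa using max_zero_one_sub_norm_eq_zero (le_abs.2 (.inr (by linarith [hl.2])))
  · refine ⟨fun s => max 0 (min (1 - s) 1), fun t => -max 0 (min t 1), fun x hx hl => ?_⟩
    have hl' : (-x) l ∈ Icc (0 : ℝ) 1 := by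
      rw [Pi.neg_apply, neg_mem_Icc_iff]
      simpa using hl
    rw [← norm_neg, max_zero_one_sub_norm_eq_sub (by simpa using hx) hij hil hjl hl']
    simp [sub_eq_add_neg]
  · refine ⟨fun s => max 0 (min (1 + s) 1), fun t => -max 0 (min (-t) 1), fun x hx hl => ?_⟩
    rw [max_zero_one_sub_norm_eq_sub hx hij hil hjl (by simpa using hl), sub_eq_add_neg]
  · have hn' : (1 : ℝ) ≤ n := by exact_mod_cast hn
    refine ⟨0, 0, fun x _ hl => ?_⟩
    simpa using max_zero_one_sub_norm_eq_zero (le_abs.2 (.inl (by linarith [hl.1])))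

/-- The closed strip between two consecutive grid lines of type `l`. -/
def strip (l : Fin 3) (n : ℤ) : Set Pt := {p | coord ℝ p l ∈ Icc (n : ℝ) (n + 1)}

theorem exists_shift_hatMap_eq_add {i j l : Fin 3} (hij : i ≠ j) (hil : i ≠ l) (hjl : j ≠ l)
    (n : ℤ) (w : ℤ × ℤ) :
    ∃ G H : ℝ → ℝ, ∀ p ∈ strip l n,
      shift (toPt w) hatMap p = G (coord ℝ p i) + H (coord ℝ p j) := by
  set k := coord ℤ (w + 1) with hk
  obtain ⟨G, H, hGH⟩ := exists_max_zero_one_sub_norm_eq_add hij hil hjl (n - k l)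
  refine ⟨fun s => G (s - k i), fun t => H (t - k j), fun p hp => ?_⟩
  rw [shift_hatMap_eq_max_norm_coord, hGH _ ?_ ?_]
  · simp [hk]
  · simp only [Pi.sub_apply, Finset.sum_sub_distrib, sum_coord, ← Int.cast_sum]
    simp
  · simpa [← hk, sub_add_eq_add_sub] using mem_Icc.1 hp

/-- On each strip of type `l`, all mixed second differences of `f` in the two directions other than
`l` vanish. -/
def IsStripAdditive (l : Fin 3) (f : Pt → ℝ) : Prop :=
  ∀ ⦃i j : Fin 3⦄, i ≠ j → i ≠ l → j ≠ l → ∀ (n : ℤ) (p : Pt) (s t : ℝ),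
    p ∈ strip l n → p + s • dirVec i ∈ strip l n → p + t • dirVec j ∈ strip l n →
    p + s • dirVec i + t • dirVec j ∈ strip l n →
    f (p + s • dirVec i + t • dirVec j) + f p = f (p + s • dirVec i) + f (p + t • dirVec j)

theorem isStripAdditive_shift_hatMap (l : Fin 3) (w : ℤ × ℤ) :
    IsStripAdditive l (shift (toPt w) hatMap) := by
  intro i j hij hil hjl n p s t h h₁ h₂ h₁₂
  obtain ⟨G, H, hGH⟩ := exists_shift_hatMap_eq_add hij hil hjl n w
  rw [hGH _ h, hGH _ h₁, hGH _ h₂, hGH _ h₁₂, coord_add_smul_dirVec_self _ t j,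
    coord_add_smul_dirVec_self _ t j, coord_add_smul_dirVec_self p s i, add_right_comm p,
    coord_add_smul_dirVec_self _ s i]
  ring

theorem isStripAdditive_hatSpline (l : Fin 3) (c : ℤ × ℤ → ℝ) :
    IsStripAdditive l (hatSpline c) := by
  intro i j hij hil hjl n p s t h h₁ h₂ h₁₂
  have hadd (x y : Pt) : hatSpline c x + hatSpline c y =
      ∑ᶠ w, (c w * shift (toPt w) hatMap x + c w * shift (toPt w) hatMap y) :=
    (finsum_add_distrib (finite_support_mul_shift_hatMap c x)
      (finite_support_mul_shift_hatMap c y)).symm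
  simp only [hadd, ← mul_add]
  simp only [isStripAdditive_shift_hatMap l _ hij hil hjl n p s t h h₁ h₂ h₁₂]

theorem IsStripAdditive.avg {l : Fin 3} {f : C(Pt, ℝ)} (hf : IsStripAdditive l f) :
    IsStripAdditive l (avg (dirVec l) f) := by
  intro i j hij hil hjl n p s t h h₁ h₂ h₁₂
  have hstrip {x : Pt} (hx : x ∈ strip l n) (r : ℝ) : x - r • dirVec l ∈ strip l n := by
    rw [sub_eq_add_neg, ← neg_smul]
    simpa only [strip, mem_ofPred_eq, coord_add_smul_dirVec_self] using hx
  have hint (x : Pt) : IntervalIntegrable (fun r : ℝ => f (x - r • dirVec l)) volume 0 1 :=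
    Continuous.intervalIntegrable (by fun_prop) 0 1
  simp only [avg_apply]
  rw [← intervalIntegral.integral_add (hint _) (hint _),
    ← intervalIntegral.integral_add (hint _) (hint _)]
  congr! 2 with r
  have hmove (x v : Pt) : x + v - r • dirVec l = x - r • dirVec l + v := add_sub_right_comm _ _ _
  have key := hf hij hil hjl n (p - r • dirVec l) s t
  simp only [← hmove] at key
  exact key (hstrip h r) (hstrip h₁ r) (hstrip h₂ r) (hstrip h₁₂ r)

theorem isStripAdditive_spline_single (l : Fin 3) (a : ℕ) (c : ℤ × ℤ → ℝ) :
    IsStripAdditive l (spline (Pi.single l a) c) := by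
  induction a with
  | zero =>
    rw [Pi.single_zero, spline_zero]
    exact isStripAdditive_hatSpline l c
  | succ a ih =>
    rw [Pi.single_add, spline_add_single_apply]
    exact ih.avg

theorem GridCell.exists_toSet_subset_strip (K : GridCell) (l : Fin 3) :
    ∃ n, K.toSet ⊆ strip l n := by
  rcases Int.units_eq_one_or K.sgn with hK | hK
  · refine ⟨K.base l, fun p hp => ?_⟩
    obtain ⟨h₀, h₁⟩ := mem_Icc_of_mem_stdSimplex hp l
    have hcoord := K.coord_eq_base_add p l
    rw [hK] at hcoord
    push_cast at hcoord
    constructor <;> linarith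
  · refine ⟨K.base l - 1, fun p hp => ?_⟩
    obtain ⟨h₀, h₁⟩ := mem_Icc_of_mem_stdSimplex hp l
    have hcoord := K.coord_eq_base_add p l
    rw [hK] at hcoord
    push_cast at hcoord
    constructor <;> push_cast <;> linarith

/-! ### Polynomial pieces of box spline series -/

/-- The polynomials that agree on `U` with a box spline series `∑_w c_w B_{m+(1,1,1)}(· - w)`. -/
def pieceSpace (m : Fin 3 → ℕ) (U : Set Pt) : Submodule ℝ BPoly where
  carrier := {q | ∃ c, EqOn (spline m c) (evalP q) U}
  zero_mem' := ⟨0, fun p _ => by simp [evalP]⟩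
  add_mem' := by
    rintro q r ⟨c, hc⟩ ⟨d, hd⟩
    exact ⟨c + d, fun p hp => by simp [hc hp, hd hp, evalP]⟩
  smul_mem' := by
    rintro a q ⟨c, hc⟩
    exact ⟨a • c, fun p hp => by simp [hc hp, evalP]⟩

/-- The polynomials annihilated by `D_i^{m_i+1} D_j^{m_j+1}` for all `i ≠ j`: the Dahmen–Micchelli
space of the box spline `B_{m+(1,1,1)}`. -/
def dmSpace (m : Fin 3 → ℕ) : Submodule ℝ BPoly :=
  ⨅ (i : Fin 3) (j : Fin 3) (_ : i ≠ j),
    LinearMap.ker (dirDeriv (dirVec i) ^ (m i + 1) * dirDeriv (dirVec j) ^ (m j + 1))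

theorem mem_dmSpace {m : Fin 3 → ℕ} {q : BPoly} :
    q ∈ dmSpace m ↔ ∀ ⦃i j⦄, i ≠ j →
      (dirDeriv (dirVec i) ^ (m i + 1) * dirDeriv (dirVec j) ^ (m j + 1)) q = 0 := by
  simp only [dmSpace, Submodule.mem_iInf, LinearMap.mem_ker]

theorem eventually_add_smul_mem {U : Set Pt} (hU : IsOpen U) {p : Pt} (hp : p ∈ U) (v : Pt) :
    ∀ᶠ t : ℝ in 𝓝 0, p + t • v ∈ U :=
  (by fun_prop : Continuous fun t : ℝ => p + t • v).continuousAt.eventually_mem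
    (hU.mem_nhds (by simpa using hp))

theorem hasDerivAt_evalP_zero (q : BPoly) (p v : Pt) :
    HasDerivAt (fun t : ℝ => evalP q (p + t • v)) (evalP (dirDeriv v q) p) 0 := by
  simpa using hasDerivAt_evalP q p v 0

theorem eqOn_evalP_dirDeriv {U : Set Pt} (hU : IsOpen U) {f f' : Pt → ℝ} {q : BPoly} {v : Pt}
    (hf : EqOn f (evalP q) U) (hf' : ∀ p ∈ U, HasDerivAt (fun t : ℝ => f (p + t • v)) (f' p) 0) :
    EqOn f' (evalP (dirDeriv v q)) U := fun p hp =>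
  (hf' p hp).unique ((hasDerivAt_evalP_zero q p v).congr_of_eventuallyEq
    ((eventually_add_smul_mem hU hp v).mono fun _ ht => hf ht))

theorem dirDeriv_dirDeriv_eq_zero {U : Set Pt} (hU : IsOpen U) (hne : U.Nonempty) {q : BPoly}
    {u v : Pt}
    (h : ∀ (p : Pt) (s t : ℝ), p ∈ U → p + s • u ∈ U → p + t • v ∈ U → p + s • u + t • v ∈ U →
      evalP q (p + s • u + t • v) + evalP q p = evalP q (p + s • u) + evalP q (p + t • v)) :
    dirDeriv u (dirDeriv v q) = 0 := by
  have hconst (p : Pt) (s : ℝ) (hp : p ∈ U) (hs : p + s • u ∈ U) :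
      evalP (dirDeriv v q) (p + s • u) = evalP (dirDeriv v q) p := by
    have hdiff : (fun t : ℝ => evalP q (p + s • u + t • v)) =ᶠ[𝓝 0]
        fun t => evalP q (p + t • v) + (evalP q (p + s • u) - evalP q p) := by
      filter_upwards [eventually_add_smul_mem hU hp v, eventually_add_smul_mem hU hs v]
        with t ht hst
      linear_combination h p s t hp hs ht hst
    exact (hasDerivAt_evalP_zero q (p + s • u) v).unique
      (((hasDerivAt_evalP_zero q p v).add_const _).congr_of_eventuallyEq hdiff)
  refine eq_of_eqOn_evalP hU hne fun p hp => ?_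
  have hzero : HasDerivAt (fun s : ℝ => evalP (dirDeriv v q) (p + s • u)) 0 0 :=
    (hasDerivAt_const 0 (evalP (dirDeriv v q) p)).congr_of_eventuallyEq
      ((eventually_add_smul_mem hU hp u).mono fun s hs => hconst p s hp hs)
  simpa [evalP] using (hasDerivAt_evalP_zero _ p u).unique hzero

theorem dirDeriv_mem_pieceSpace {U : Set Pt} (hU : IsOpen U) {m : Fin 3 → ℕ} {i : Fin 3}
    {q : BPoly} (hq : q ∈ pieceSpace (m + Pi.single i 1) U) :
    dirDeriv (dirVec i) q ∈ pieceSpace m U := by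
  obtain ⟨c, hc⟩ := hq
  exact ⟨backwardDiff i c, eqOn_evalP_dirDeriv hU hc fun p _ => by
    simpa using hasDerivAt_spline m i c p 0⟩

theorem dirDeriv_pow_mem_pieceSpace {U : Set Pt} (hU : IsOpen U) {m : Fin 3 → ℕ} {i : Fin 3}
    {a : ℕ} {q : BPoly} (hq : q ∈ pieceSpace (m + Pi.single i a) U) :
    (dirDeriv (dirVec i) ^ a) q ∈ pieceSpace m U := by
  induction a generalizing q with
  | zero => simpa using hq
  | succ a ih =>
    rw [Pi.single_add, ← add_assoc] at hq
    exact ih (dirDeriv_mem_pieceSpace hU hq)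

theorem dirDeriv_dirDeriv_eq_zero_of_mem_pieceSpace_single {U : Set Pt} (hU : IsOpen U)
    (hne : U.Nonempty) {K : GridCell} (hK : U ⊆ K.toSet) {i j l : Fin 3} (hij : i ≠ j)
    (hil : i ≠ l) (hjl : j ≠ l) {a : ℕ} {q : BPoly} (hq : q ∈ pieceSpace (Pi.single l a) U) :
    dirDeriv (dirVec i) (dirDeriv (dirVec j) q) = 0 := by
  obtain ⟨c, hc⟩ := hq
  obtain ⟨n, hn⟩ := K.exists_toSet_subset_strip l
  have hstrip := hK.trans hn
  refine dirDeriv_dirDeriv_eq_zero hU hne fun p s t h h₁ h₂ h₁₂ => ?_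
  rw [← hc h, ← hc h₁, ← hc h₂, ← hc h₁₂]
  exact isStripAdditive_spline_single l a c hij hil hjl n p s t (hstrip h) (hstrip h₁) (hstrip h₂)
    (hstrip h₁₂)

theorem pieceSpace_le_dmSpace {U : Set Pt} (hU : IsOpen U) (hne : U.Nonempty) {K : GridCell}
    (hK : U ⊆ K.toSet) (m : Fin 3 → ℕ) : pieceSpace m U ≤ dmSpace m := fun q hq => by
  refine mem_dmSpace.2 fun i j hij => ?_
  obtain ⟨l, hil, hjl⟩ : ∃ l, i ≠ l ∧ j ≠ l := by
    revert i j
    decide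
  have hm : m = Pi.single l (m l) + Pi.single i (m i) + Pi.single j (m j) := by
    conv_lhs =>
      rw [← Finset.univ_sum_single m, univ_fin_three_eq hil.symm hjl.symm hij,
        Finset.sum_insert (by simp [hil.symm, hjl.symm]), Finset.sum_pair hij, ← add_assoc]
  rw [hm] at hq
  have hmem := dirDeriv_pow_mem_pieceSpace hU (dirDeriv_pow_mem_pieceSpace hU hq)
  rw [pow_succ', pow_succ', ((commute_dirDeriv _ _).pow_left _).mul_mul_mul_comm]
  exact dirDeriv_dirDeriv_eq_zero_of_mem_pieceSpace_single hU hne hK hij hil hjl hmem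

/-! ### Reproduction of the Dahmen–Micchelli space -/

theorem dirDeriv_mem_dmSpace {m : Fin 3 → ℕ} {l : Fin 3} {q : BPoly}
    (hq : q ∈ dmSpace (m + Pi.single l 1)) : dirDeriv (dirVec l) q ∈ dmSpace m := by
  refine mem_dmSpace.2 fun i j hij => ?_
  have key := mem_dmSpace.1 hq hij
  by_cases hj : j = l
  · subst hj
    simpa [hij, pow_succ _ (m j + 1)] using key
  by_cases hi : i = l
  · subst hi
    rw [((commute_dirDeriv _ _).pow_pow _ _).eq]
    rw [((commute_dirDeriv _ _).pow_pow _ _).eq] at key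
    simpa [hij.symm, pow_succ _ (m i + 1)] using key
  · rw [← Module.End.mul_apply,
      (((commute_dirDeriv _ _).pow_left _).mul_left ((commute_dirDeriv _ _).pow_left _)).eq,
      Module.End.mul_apply]
    simp only [Pi.add_apply, Pi.single_apply, hi, hj, if_false, add_zero] at key
    rw [key, map_zero]

theorem mem_dmSpace_of_dirDeriv_eq_zero {m : Fin 3 → ℕ} {l : Fin 3} {q : BPoly}
    (hq : q ∈ dmSpace (m + Pi.single l 1)) (hl : dirDeriv (dirVec l) q = 0) : q ∈ dmSpace m := by
  refine mem_dmSpace.2 fun i j hij => ?_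
  by_cases hj : j = l
  · subst hj
    simp [pow_succ _ (m j), hl]
  by_cases hi : i = l
  · subst hi
    rw [((commute_dirDeriv _ _).pow_pow _ _).eq]
    simp [pow_succ _ (m i), hl]
  · simpa [hi, hj] using mem_dmSpace.1 hq hij

theorem eq_smul_dirVec_add_smul_dirVec {i j : Fin 3} (hij : i ≠ j) (p : Pt) :
    p = (coord ℝ p j * coord ℝ (dirVec i) j) • dirVec i +
      (coord ℝ p i * coord ℝ (dirVec j) i) • dirVec j := by
  fin_cases i <;> fin_cases j <;> first | contradiction | ext <;> simp [coord, dirVec, toPt, dirZ]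

theorem eq_apply_zero_of_forall_add_smul {i j : Fin 3} (hij : i ≠ j) {f : Pt → ℝ}
    (hi : ∀ p (t : ℝ), f (p + t • dirVec i) = f p) (hj : ∀ p (t : ℝ), f (p + t • dirVec j) = f p)
    (p : Pt) : f p = f 0 := by
  rw [eq_smul_dirVec_add_smul_dirVec hij p, hj, ← zero_add (_ • dirVec i), hi]

theorem exists_eq_C_of_dirDeriv_eq_zero {i j : Fin 3} (hij : i ≠ j) {q : BPoly}
    (hi : dirDeriv (dirVec i) q = 0) (hj : dirDeriv (dirVec j) q = 0) : ∃ b, q = C b := by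
  refine ⟨evalP q 0, eq_of_eqOn_evalP isOpen_univ univ_nonempty fun p _ => ?_⟩
  simpa [evalP] using eq_apply_zero_of_forall_add_smul hij (evalP_add_smul_of_dirDeriv_eq_zero hi)
    (evalP_add_smul_of_dirDeriv_eq_zero hj) p

theorem exists_linInterp_coord_eq_evalP {i : Fin 3} {h : BPoly} (hi : dirDeriv (dirVec i) h = 0)
    (hh : h ∈ dmSpace 0) : ∃ d : ℤ → ℝ, ∀ p, linInterp d (coord ℝ p i) = evalP h p := by
  obtain ⟨j, k, hij, hik, hjk⟩ :=
    (by decide : ∀ i : Fin 3, ∃ j k, i ≠ j ∧ i ≠ k ∧ j ≠ k) i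
  have hDi : dirDeriv (dirVec i) (dirDeriv (dirVec j) h) = 0 := by
    rw [dirDeriv_comm, hi, map_zero]
  have hDk : dirDeriv (dirVec k) (dirDeriv (dirVec j) h) = 0 := by
    simpa using mem_dmSpace.1 hh hjk.symm
  obtain ⟨b, hb⟩ := exists_eq_C_of_dirDeriv_eq_zero hik hDi hDk
  refine ⟨fun n => evalP h 0 + coord ℝ (dirVec j) i * b * n, fun p => ?_⟩
  rw [linInterp_add_mul]
  conv_rhs => rw [eq_smul_dirVec_add_smul_dirVec hij p]
  rw [evalP_add_smul_of_dirDeriv_eq_C hb, ← zero_add (_ • dirVec i),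
    evalP_add_smul_of_dirDeriv_eq_zero hi]
  ring

theorem exists_spline_add_single_comp_coord_eq_evalP {m : Fin 3 → ℕ} {i l : Fin 3}
    (hli : l ≠ i) {d : ℤ → ℝ} {h : BPoly} (hi : dirDeriv (dirVec i) h = 0)
    (hd : ∀ p, spline m (fun w => d (coord ℤ (w + 1) i)) p = evalP (dirDeriv (dirVec l) h) p) :
    ∃ e : ℤ → ℝ, ∀ p, spline (m + Pi.single l 1) (fun w => e (coord ℤ (w + 1) i)) p =
      evalP h p := by
  obtain ⟨e, he⟩ := exists_backwardDiff_comp_coord_eq hli d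
  set c : ℤ × ℤ → ℝ := fun w => e (coord ℤ (w + 1) i)
  set f : Pt → ℝ := fun p => spline (m + Pi.single l 1) c p - evalP h p with hf
  have hfi (p : Pt) (t : ℝ) : f (p + t • dirVec i) = f p := by
    simp only [hf]
    rw [spline_comp_coord_add_smul, evalP_add_smul_of_dirDeriv_eq_zero hi]
  have hfl (p : Pt) (t : ℝ) : f (p + t • dirVec l) = f p := by
    have hderiv (s : ℝ) : HasDerivAt (fun t : ℝ => f (p + t • dirVec l)) 0 s := by
      have hsub := (hasDerivAt_spline m l c p s).fun_sub (hasDerivAt_evalP h p (dirVec l) s)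
      rwa [he, hd, sub_self] at hsub
    simpa using is_const_of_deriv_eq_zero (fun s => (hderiv s).differentiableAt)
      (fun s => (hderiv s).deriv) t 0
  refine ⟨fun n => e n - f 0, fun p => ?_⟩
  have hsplit : (fun w => e (coord ℤ (w + 1) i) - f 0) = c - fun _ => f 0 := rfl
  have hconst : f p = f 0 := eq_apply_zero_of_forall_add_smul hli hfl hfi p
  rw [hsplit, map_sub, ContinuousMap.sub_apply, spline_const, ← hconst]
  exact sub_sub_cancel _ _

theorem exists_spline_comp_coord_eq_evalP {m : Fin 3 → ℕ} {i : Fin 3} {h : BPoly}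
    (hi : dirDeriv (dirVec i) h = 0) (hh : h ∈ dmSpace m) :
    ∃ d : ℤ → ℝ, ∀ p, spline m (fun w => d (coord ℤ (w + 1) i)) p = evalP h p := by
  induction m using pi_nat_induction generalizing h with
  | zero =>
    simpa only [spline_zero, hatSpline_comp_coord] using exists_linInterp_coord_eq_evalP hi hh
  | add_single m l ih =>
    rcases eq_or_ne l i with rfl | hli
    · obtain ⟨d, hd⟩ := ih hi (mem_dmSpace_of_dirDeriv_eq_zero hh hi)
      refine ⟨d, fun p => ?_⟩
      rw [spline_add_single_apply, avg_eq_of_forall_sub_smul fun t => ?_, hd]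
      rw [sub_eq_add_neg, ← neg_smul, spline_comp_coord_add_smul]
    · have hDi : dirDeriv (dirVec i) (dirDeriv (dirVec l) h) = 0 := by
        rw [dirDeriv_comm, hi, map_zero]
      obtain ⟨d, hd⟩ := ih hDi (dirDeriv_mem_dmSpace hh)
      exact exists_spline_add_single_comp_coord_eq_evalP hli hi hd

theorem mem_pieceSpace_of_dirDeriv_eq {U : Set Pt} (hU : IsOpen U) (hne : U.Nonempty) {K : GridCell}
    (hK : U ⊆ K.toSet) {m : Fin 3 → ℕ} {i : Fin 3} {q g : BPoly}
    (hq : q ∈ dmSpace m) (hg : g ∈ pieceSpace m U)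
    (h : dirDeriv (dirVec i) g = dirDeriv (dirVec i) q) : q ∈ pieceSpace m U := by
  have hker : dirDeriv (dirVec i) (q - g) = 0 := by rw [map_sub, h, sub_self]
  obtain ⟨d, hd⟩ := exists_spline_comp_coord_eq_evalP hker
    (sub_mem hq (pieceSpace_le_dmSpace hU hne hK m hg))
  rw [← sub_add_cancel q g]
  exact add_mem ⟨_, fun p _ => hd p⟩ hg

theorem dmSpace_zero_le_pieceSpace {U : Set Pt} (hU : IsOpen U) (hne : U.Nonempty) {K : GridCell}
    (hK : U ⊆ K.toSet) : dmSpace 0 ≤ pieceSpace 0 U := fun q hq => by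
  obtain ⟨a, ha⟩ : ∃ a, dirDeriv (dirVec 0) q = C a := by
    refine exists_eq_C_of_dirDeriv_eq_zero (i := 1) (j := 2) (by decide) ?_ ?_
    · simpa using mem_dmSpace.1 hq (by decide : (1 : Fin 3) ≠ 0)
    · simpa using mem_dmSpace.1 hq (by decide : (2 : Fin 3) ≠ 0)
  have hlin : C a * X 0 ∈ pieceSpace 0 U := by
    refine ⟨fun w => 0 + -a * coord ℤ (w + 1) 1, fun p _ => ?_⟩
    rw [spline_zero, hatSpline_comp_coord (fun n => 0 + -a * n), linInterp_add_mul]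
    simp [coord, evalP]
  refine mem_pieceSpace_of_dirDeriv_eq hU hne hK hq hlin (i := 0) ?_
  rw [ha]
  simp [dirDeriv_apply, dirVec, toPt, dirZ]

theorem dmSpace_le_pieceSpace {U : Set Pt} (hU : IsOpen U) (hne : U.Nonempty) {K : GridCell}
    (hK : U ⊆ K.toSet) (m : Fin 3 → ℕ) : dmSpace m ≤ pieceSpace m U := by
  induction m using pi_nat_induction with
  | zero => exact dmSpace_zero_le_pieceSpace hU hne hK
  | add_single m l ih =>
    intro q hq
    obtain ⟨c, hc⟩ := ih (dirDeriv_mem_dmSpace hq)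
    obtain ⟨e, rfl⟩ := exists_backwardDiff_eq l c
    obtain ⟨g, -, hg⟩ := isPiecewisePoly_spline (m + Pi.single l 1) e K
    have hg' := hg.mono hK
    refine mem_pieceSpace_of_dirDeriv_eq hU hne hK hq ⟨e, hg'⟩ (eq_of_eqOn_evalP hU hne ?_) (i := l)
    have hDg := eqOn_evalP_dirDeriv hU hg' (v := dirVec l) fun p _ => by
      simpa using hasDerivAt_spline m l e p 0
    exact hDg.symm.trans hc

theorem pieceSpace_eq_dmSpace {U : Set Pt} (hU : IsOpen U) (hne : U.Nonempty) {K : GridCell}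
    (hK : U ⊆ K.toSet) (m : Fin 3 → ℕ) : pieceSpace m U = dmSpace m :=
  (pieceSpace_le_dmSpace hU hne hK m).antisymm (dmSpace_le_pieceSpace hU hne hK m)

/-! ### Box splines on a triangle -/

namespace Tri

theorem isOpen_toSet (T : Tri) : IsOpen T.toSet := by
  unfold toSet
  split_ifs <;> exact (isOpen_lt (by fun_prop) (by fun_prop)).and
    ((isOpen_lt (by fun_prop) (by fun_prop)).and (isOpen_lt (by fun_prop) (by fun_prop)))

theorem nonempty_toSet (T : Tri) : T.toSet.Nonempty := by
  unfold toSet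
  split_ifs
  · exact ⟨(T.v.1 + 1 / 4, T.v.2 + 1 / 2), by norm_num⟩
  · exact ⟨(T.v.1 + 1 / 2, T.v.2 + 1 / 4), by norm_num⟩

theorem isBounded_toSet (T : Tri) : Bornology.IsBounded T.toSet := by
  refine (Metric.isBounded_closedBall (x := toPt T.v) (r := 1)).subset fun p hp => ?_
  rw [mem_closedBall_iff_norm, norm_prod_le_iff, Real.norm_eq_abs, Real.norm_eq_abs, abs_le, abs_le]
  unfold toSet at hp
  change (-1 ≤ p.1 - T.v.1 ∧ p.1 - T.v.1 ≤ 1) ∧ -1 ≤ p.2 - T.v.2 ∧ p.2 - T.v.2 ≤ 1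
  split_ifs at hp <;> obtain ⟨h₁, h₂, h₃⟩ := hp <;>
    exact ⟨⟨by linarith, by linarith⟩, by linarith, by linarith⟩

theorem exists_toSet_subset_gridCell (T : Tri) : ∃ K : GridCell, T.toSet ⊆ K.toSet := by
  unfold toSet
  split_ifs
  · refine ⟨⟨-1, ![T.v.2 + 1, -T.v.1, T.v.1 - T.v.2], ?_⟩, fun p ⟨h₁, h₂, h₃⟩ => ?_⟩
    · simp only [Fin.sum_univ_three, Matrix.cons_val, Units.val_neg, Units.val_one]
      ring
    · refine GridCell.mem_toSet_iff.2 fun i => ?_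
      fin_cases i <;> simp [GridCell.bary, coord] <;> linarith
  · refine ⟨⟨1, ![T.v.2, -T.v.1 - 1, T.v.1 - T.v.2], ?_⟩, fun p ⟨h₁, h₂, h₃⟩ => ?_⟩
    · simp only [Fin.sum_univ_three, Matrix.cons_val, Units.val_one]
      ring
    · refine GridCell.mem_toSet_iff.2 fun i => ?_
      fin_cases i <;> simp [GridCell.bary, coord] <;> linarith

end Tri

theorem boxN_eq_iterAvg (a b c : ℕ) (p : Pt) :
    boxN (a + 1) (b + 1) (c + 1) p = iterAvg ![a, b, c] hatMap p := by
  induction a generalizing p with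
  | zero =>
    induction b generalizing p with
    | zero =>
      induction c generalizing p with
      | zero =>
        have hm : (![0, 0, 0] : Fin 3 → ℕ) = 0 := by simp
        rw [hm, iterAvg_zero, zero_add, boxN]
        rfl
      | succ c ih =>
        have hm : ![0, 0, c + 1] = ![0, 0, c] + Pi.single 2 1 := by ext k; fin_cases k <;> simp
        rw [hm, iterAvg_add_single_apply, avg_apply, zero_add, boxN]
        simp [← ih, dirVec, toPt, dirZ, Prod.sub_def]
    | succ b ih =>
      have hm : ![0, b + 1, c] = ![0, b, c] + Pi.single 1 1 := by ext k; fin_cases k <;> simp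
      rw [hm, iterAvg_add_single_apply, avg_apply, zero_add, boxN]
      simp [← ih, dirVec, toPt, dirZ, Prod.sub_def]
  | succ a ih =>
    have hm : ![a + 1, b, c] = ![a, b, c] + Pi.single 0 1 := by ext k; fin_cases k <;> simp
    rw [hm, iterAvg_add_single_apply, avg_apply, boxN]
    simp [← ih, dirVec, toPt, dirZ, Prod.sub_def]

section VSpace

variable (a b c : ℕ) (T : Tri)

theorem exists_finset_spline_eq_sum_trBox : ∃ s₀ : Finset (ℤ × ℤ), ∀ s ⊇ s₀, ∀ (d : ℤ × ℤ → ℝ),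
    ∀ p ∈ T.toSet,
      spline ![a, b, c] d p = ∑ w ∈ s, d w * trBox (a + 1) (b + 1) (c + 1) w p := by
  obtain ⟨R, hR⟩ := T.isBounded_toSet.exists_norm_le
  refine ⟨(finite_setOf_norm_le (R + ∑ i, (![a, b, c] i : ℝ) + 2)).toFinset,
    fun s hs d p hp => ?_⟩
  rw [spline_apply_eq_sum _ d (hR p hp) fun w hw => hs (by simpa using hw)]
  exact Finset.sum_congr rfl fun w _ => congrArg (d w * ·) (boxN_eq_iterAvg a b c _).symm

theorem exists_represents_iff_mem_pieceSpace (q : BPoly) :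
    (∃ e, Represents (a + 1) (b + 1) (c + 1) T q e) ↔ q ∈ pieceSpace ![a, b, c] T.toSet := by
  classical
  obtain ⟨s, hs⟩ := exists_finset_spline_eq_sum_trBox a b c T
  constructor
  · rintro ⟨e, -, he⟩
    refine ⟨e, fun p hp => ?_⟩
    rw [hs (s ∪ e.support) Finset.subset_union_left e p hp, he p hp,
      e.sum_of_support_subset Finset.subset_union_right _ (by simp)]
  · rintro ⟨d, hd⟩
    have hinactive {w p} (hw : w ∉ activeSet (a + 1) (b + 1) (c + 1) T) (hp : p ∈ T.toSet) :
        trBox (a + 1) (b + 1) (c + 1) w p = 0 := not_not.1 hw p hp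
    refine ⟨Finsupp.onFinset (s.filter (· ∈ activeSet (a + 1) (b + 1) (c + 1) T))
      (fun w => if w ∈ s ∧ w ∈ activeSet (a + 1) (b + 1) (c + 1) T then d w else 0)
      fun w hw => by simpa using (ite_ne_right_iff.1 hw).1, fun w hw => ?_, fun p hp => ?_⟩
    · exact (Finset.mem_filter.1 (Finsupp.support_onFinset_subset hw)).2
    · rw [Finsupp.onFinset_sum _ (by simp), ← hd hp, hs s subset_rfl d p hp, Finset.sum_filter]
      refine Finset.sum_congr rfl fun w hw => ?_
      by_cases hwA : w ∈ activeSet (a + 1) (b + 1) (c + 1) T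
      · simp [hw, hwA]
      · simp [hwA, hinactive hwA hp]

theorem VSpace_eq_dmSpace : VSpace (a + 1) (b + 1) (c + 1) T = dmSpace ![a, b, c] := by
  obtain ⟨K, hK⟩ := T.exists_toSet_subset_gridCell
  rw [← pieceSpace_eq_dmSpace T.isOpen_toSet T.nonempty_toSet hK]
  exact Set.ext (exists_represents_iff_mem_pieceSpace a b c T)

theorem totalDegree_le_of_mem_VSpace {q : BPoly} (hq : q ∈ VSpace (a + 1) (b + 1) (c + 1) T) :
    q.totalDegree ≤ a + b + c + 1 := by
  obtain ⟨d, hd⟩ := (exists_represents_iff_mem_pieceSpace a b c T q).1 hq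
  obtain ⟨K, hK⟩ := T.exists_toSet_subset_gridCell
  obtain ⟨r, hr, hdr⟩ := isPiecewisePoly_spline ![a, b, c] d K
  obtain rfl : q = r :=
    eq_of_eqOn_evalP T.isOpen_toSet T.nonempty_toSet (hd.symm.trans (hdr.mono hK))
  simpa [Fin.sum_univ_three] using hr

end VSpace

/-- For `n = (n₁,n₂,n₃)` with all `nᵢ ≥ 1`, the span of the
restrictions to a triangle of the box spline translates active on it is a
space of polynomials of total degree `≤ n₁+n₂+n₃-2` which is independent of
the chosen triangle. -/
theorem statement1 (n₁ n₂ n₃ : ℕ) (h₁ : 1 ≤ n₁) (h₂ : 1 ≤ n₂) (h₃ : 1 ≤ n₃)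
    (T T' : Tri) :
    VSpace n₁ n₂ n₃ T = VSpace n₁ n₂ n₃ T' ∧
    ∀ q ∈ VSpace n₁ n₂ n₃ T, q.totalDegree ≤ n₁ + n₂ + n₃ - 2 := by
  obtain ⟨a, rfl⟩ := Nat.exists_eq_add_of_le' h₁
  obtain ⟨b, rfl⟩ := Nat.exists_eq_add_of_le' h₂
  obtain ⟨c, rfl⟩ := Nat.exists_eq_add_of_le' h₃
  refine ⟨(VSpace_eq_dmSpace a b c T).trans (VSpace_eq_dmSpace a b c T').symm, fun q hq => ?_⟩
  have := totalDegree_le_of_mem_VSpace a b c T hq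
  omega

end
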